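/- arXiv:2402.17021 — 3 statements merged into one kernel-verified Lean document; each statement's English description precedes it below -/
import Mathlib

section
/- Fix real numbers u, v, w, s, t with u+v > 0 and s < t, and let k be a natural number with u + k − s/2 < 0. With q = q_N = exp(−2/√N), the limit as N → ∞ of [ (q^{−2u−2k+s};q)_∞ (−q^{v+w+s};q)_∞ (q^{v−u−k+t};q)_∞ (−q^{w−u−k+t};q)_∞ ] / [ (q^{v−u−k+s};q)_∞ (−q^{w−u−k+s};q)_∞ (q^{−2u−2k+t};q)_∞ (−q^{v+w+t};q)_∞ ] exists and equals Γ(v−u−k+s) Γ(−2u−2k+t) / ( Γ(−2u−2k+s) Γ(v−u−k+t) ). -/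
/-!
As `q → 1`, `(q^x; q)_∞` is asymptotic to `c(q) (1 - q)^(-x) / Γ(x)`, and the factors other than
`1 / Γ(x)` cancel in a cross ratio `f(α + s) f(β + t) / (f(β + s) f(α + t))`. Termwise, the cross
ratio of `1 - z q^(x + k)` tends to that of `x + k` if `z = 1` and to `1` if `z = -1`, so it is
enough to pass to the limit inside the infinite product. This is legitimate because, for
`f(x) = 1 - z q^(x + k)`,
`f(α + s) f(β + t) - f(β + s) f(α + t) = z q^k (q^β - q^α) (q^s - q^t)`:
the numerator is of second order in `1 - q`, which makes the cross ratio `1 + O(1 / (k + 1)^2)`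
uniformly in `q`.
-/

open Filter

/-- Infinite q-Pochhammer symbol `(a;q)_∞ = ∏_{k=0}^∞ (1 - a q^k)` for complex `a, q`. -/
noncomputable def qPochInf (a q : ℂ) : ℂ := ∏' k : ℕ, (1 - a * q ^ k)

/-- Weak asymmetry scaling `q_N = exp(-2/√N)`. -/
noncomputable def qN (N : ℕ) : ℝ := Real.exp (-2 / Real.sqrt N)

/-- Real powers of `q_N`: `q_N^x = exp(-2x/√N)`, as a complex number. -/
noncomputable def qpow (N : ℕ) (x : ℝ) : ℂ := Complex.ofReal (Real.exp (-2 * x / Real.sqrt N))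

open Topology

section CrossRatio

variable {A K : Type*} [Add A] [Field K]

/-- The cross ratio `f(α + s) f(β + t) / (f(β + s) f(α + t))`. It is unchanged when `f` is
multiplied by a constant or by an exponential, which is how the normalisation of the q-Gamma
function drops out. -/
def crossRatio (f : A → K) (α β s t : A) : K :=
  f (α + s) * f (β + t) / (f (β + s) * f (α + t))

lemma crossRatio_sub_one {f : A → K} {α β s t : A} (h₁ : f (β + s) ≠ 0) (h₂ : f (α + t) ≠ 0) :
    crossRatio f α β s t - 1 =
      (f (α + s) * f (β + t) - f (β + s) * f (α + t)) / (f (β + s) * f (α + t)) := by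
  rw [crossRatio, div_sub_one (mul_ne_zero h₁ h₂)]

lemma crossRatio_div_const (f : A → K) {c : K} (hc : c ≠ 0) (α β s t : A) :
    crossRatio (fun x ↦ f x / c) α β s t = crossRatio f α β s t := by
  simp only [crossRatio, div_mul_div_comm, div_div_div_cancel_right₀ (mul_ne_zero hc hc)]

variable [TopologicalSpace K] [IsTopologicalDivisionRing K]

lemma tendsto_crossRatio {ι : Type*} {l : Filter ι} {f : ι → A → K} {g : A → K} {α β s t : A}
    (hf : ∀ x, Tendsto (f · x) l (𝓝 (g x))) (h₁ : g (β + s) ≠ 0) (h₂ : g (α + t) ≠ 0) :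
    Tendsto (fun i ↦ crossRatio (f i) α β s t) l (𝓝 (crossRatio g α β s t)) :=
  ((hf _).mul (hf _)).div ((hf _).mul (hf _)) (mul_ne_zero h₁ h₂)

lemma hasProd_crossRatio {ι : Type*} {f : ι → A → K} {g : A → K} {α β s t : A}
    (hf : ∀ x, HasProd (f · x) (g x)) (h₁ : g (β + s) ≠ 0) (h₂ : g (α + t) ≠ 0) :
    HasProd (fun i ↦ crossRatio (f i) α β s t) (crossRatio g α β s t) :=
  ((hf _).mul (hf _)).div₀ ((hf _).mul (hf _)) (mul_ne_zero h₁ h₂)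

end CrossRatio

section Gamma

lemma crossRatio_GammaSeq (α β s t : ℂ) {n : ℕ} (hn : n ≠ 0) :
    crossRatio (Complex.GammaSeq · n) β α s t =
      ∏ k ∈ Finset.range (n + 1), crossRatio (fun x ↦ x + (k : ℂ)) α β s t := by
  have hn' : (n : ℂ) ≠ 0 := Nat.cast_ne_zero.2 hn
  have hfact : (n.factorial : ℂ) ≠ 0 := Nat.cast_ne_zero.2 n.factorial_ne_zero
  have hpow (x : ℂ) : (n : ℂ) ^ x ≠ 0 := by simp [Complex.cpow_eq_zero_iff, hn']
  simp only [crossRatio, Complex.GammaSeq, Finset.prod_div_distrib, Finset.prod_mul_distrib,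
    Complex.cpow_add _ _ hn', div_mul_div_comm, div_div_div_eq]
  field [hpow α, hpow β, hpow s, hpow t]

lemma summable_inv_add_natCast_mul_add_natCast (a b : ℂ) :
    Summable fun k : ℕ ↦ ((a + k) * (b + k))⁻¹ := by
  have h : Summable fun k : ℤ ↦ ((a + k) * (b + k))⁻¹ := by
    refine EisensteinSeries.summable_inv_of_isBigO_rpow_inv one_lt_two ?_
    simpa [pow_two] using (EisensteinSeries.linear_inv_isBigO_right 1 b).mul
      (EisensteinSeries.linear_inv_isBigO_right 1 a)
  exact_mod_cast h.comp_injective Nat.cast_injective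

lemma tprod_crossRatio_add_natCast {α β s t : ℂ} (hαs : ∀ m : ℕ, α + s ≠ -m)
    (hβt : ∀ m : ℕ, β + t ≠ -m) (hβs : ∀ m : ℕ, β + s ≠ -m) (hαt : ∀ m : ℕ, α + t ≠ -m) :
    ∏' k : ℕ, crossRatio (fun x ↦ x + (k : ℂ)) α β s t = crossRatio Complex.Gamma β α s t := by
  have hsub (k : ℕ) : crossRatio (fun x ↦ x + (k : ℂ)) α β s t - 1 =
      (α - β) * (t - s) * ((β + s + k) * (α + t + k))⁻¹ := by
    rw [crossRatio_sub_one (mt eq_neg_of_add_eq_zero_left (hβs k))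
      (mt eq_neg_of_add_eq_zero_left (hαt k))]
    ring
  have hmul : Multipliable fun k : ℕ ↦ crossRatio (fun x ↦ x + (k : ℂ)) α β s t := by
    have hsum : Summable fun k : ℕ ↦ ‖crossRatio (fun x ↦ x + (k : ℂ)) α β s t - 1‖ := by
      simp only [hsub]
      exact ((summable_inv_add_natCast_mul_add_natCast _ _).mul_left _).norm
    simpa only [add_sub_cancel] using multipliable_one_add_of_summable hsum
  have hseq : Tendsto (fun n ↦ crossRatio (Complex.GammaSeq · n) β α s t) atTop
      (𝓝 (crossRatio Complex.Gamma β α s t)) :=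
    tendsto_crossRatio Complex.GammaSeq_tendsto_Gamma (Complex.Gamma_ne_zero hαs)
      (Complex.Gamma_ne_zero hβt)
  refine tendsto_nhds_unique
    (hmul.hasProd.tendsto_prod_nat.comp (tendsto_add_atTop_nat 1)) (hseq.congr' ?_)
  filter_upwards [eventually_ne_atTop 0] with n hn using crossRatio_GammaSeq α β s t hn

end Gamma

section QPochhammer

lemma hasProd_qPochInf {q : ℂ} (hq : ‖q‖ < 1) (a : ℂ) :
    HasProd (fun k : ℕ ↦ 1 - a * q ^ k) (qPochInf a q) := by
  have hsum : Summable fun k : ℕ ↦ ‖-(a * q ^ k)‖ :=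
    ((summable_geometric_of_norm_lt_one hq).mul_left a).neg.norm
  simpa only [qPochInf, sub_eq_add_neg] using (multipliable_one_add_of_summable hsum).hasProd

lemma qPochInf_ne_zero {a q : ℂ} (hq : ‖q‖ < 1) (h : ∀ k : ℕ, 1 - a * q ^ k ≠ 0) :
    qPochInf a q ≠ 0 := by
  have hsum : Summable fun k : ℕ ↦ ‖-(a * q ^ k)‖ :=
    ((summable_geometric_of_norm_lt_one hq).mul_left a).neg.norm
  simpa only [qPochInf, sub_eq_add_neg] using
    tprod_one_add_ne_zero_of_summable (by simpa only [← sub_eq_add_neg] using h) hsum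

/-- The complex power `q^x` of the base `q = exp(-ε)`; the limit `q → 1` from below is `ε → 0` from
above. -/
noncomputable def qCpow (ε : ℝ) (x : ℂ) : ℂ := Complex.exp (-(ε * x))

lemma qCpow_add (ε : ℝ) (x y : ℂ) : qCpow ε (x + y) = qCpow ε x * qCpow ε y := by
  rw [qCpow, qCpow, qCpow, ← Complex.exp_add, mul_add, neg_add]

lemma qCpow_natCast (ε : ℝ) (k : ℕ) : qCpow ε k = qCpow ε 1 ^ k := by
  rw [qCpow, qCpow, ← Complex.exp_nat_mul]
  ring_nf

lemma norm_qCpow_natCast (ε : ℝ) (k : ℕ) : ‖qCpow ε k‖ = Real.exp (-(ε * k)) := by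
  rw [qCpow, Complex.norm_exp]
  simp

lemma norm_qCpow_one_lt_one {ε : ℝ} (hε : 0 < ε) : ‖qCpow ε 1‖ < 1 := by
  simpa [qCpow, Complex.norm_exp] using hε

lemma hasDerivAt_qCpow (x : ℂ) : HasDerivAt (qCpow · x) (-x) 0 := by
  simpa [qCpow] using (((hasDerivAt_id (0 : ℝ)).ofReal_comp.mul_const x).neg).cexp

lemma tendsto_qCpow (x : ℂ) : Tendsto (qCpow · x) (𝓝[>] 0) (𝓝 1) := by
  simpa [qCpow] using (hasDerivAt_qCpow x).continuousAt.tendsto.mono_left nhdsWithin_le_nhds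

lemma tendsto_one_sub_qCpow_div (x : ℂ) :
    Tendsto (fun ε : ℝ ↦ (1 - qCpow ε x) / ε) (𝓝[>] 0) (𝓝 x) := by
  have h := (hasDerivAt_qCpow x).tendsto_slope_zero_right.neg
  rw [neg_neg] at h
  refine h.congr fun ε ↦ ?_
  simp only [zero_add, qCpow, Complex.ofReal_zero, zero_mul, neg_zero, Complex.exp_zero,
    Complex.real_smul, Complex.ofReal_inv]
  ring

lemma isBigO_qCpow_sub_qCpow (x y : ℂ) :
    (fun ε ↦ qCpow ε x - qCpow ε y) =O[𝓝[>] 0] (fun ε ↦ ε) := by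
  simpa [qCpow] using
    (((hasDerivAt_qCpow x).sub (hasDerivAt_qCpow y)).isBigO_sub).mono nhdsWithin_le_nhds

end QPochhammer

section LowerBounds

lemma mul_exp_neg_le_one_sub_exp_neg (y : ℝ) : y * Real.exp (-y) ≤ 1 - Real.exp (-y) := by
  have h := mul_le_mul_of_nonneg_right (Real.add_one_le_exp y) (Real.exp_pos (-y)).le
  rw [← Real.exp_add, add_neg_cancel, Real.exp_zero] at h
  linarith

lemma sq_mul_exp_neg_le_sq_one_sub_exp_neg {y : ℝ} (hy : 0 ≤ y) :
    y ^ 2 * Real.exp (-y) ≤ (1 - Real.exp (-y)) ^ 2 := by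
  have hsinh : y / 2 ≤ Real.sinh (y / 2) := Real.self_le_sinh_iff.2 (by positivity)
  have hsq : y ^ 2 ≤ (2 * Real.sinh (y / 2)) ^ 2 := by gcongr; linarith
  have hfactor : 2 * Real.sinh (y / 2) * Real.exp (-(y / 2)) = 1 - Real.exp (-y) := by
    rw [Real.sinh_eq, mul_div_cancel₀ _ two_ne_zero, sub_mul, ← Real.exp_add, ← Real.exp_add]
    ring_nf
    simp
  calc y ^ 2 * Real.exp (-y) ≤ (2 * Real.sinh (y / 2)) ^ 2 * Real.exp (-y) := by gcongr
    _ = (1 - Real.exp (-y)) ^ 2 := by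
      rw [← hfactor, mul_pow _ (Real.exp _), ← Real.exp_nat_mul]
      ring_nf

/-- As `q → 1`, the factors `1 - z q^(x + k)` of `(z q^x; q)_∞` are bounded below by a constant
times `1 - q^(k + 1)`, uniformly in `k`. This is what is asked of the denominators of a cross ratio
of q-Pochhammer symbols in order to take its limit factor by factor. -/
def FactorsBoundedBelow (z x : ℂ) : Prop :=
  ∃ c > 0, ∀ᶠ ε : ℝ in 𝓝[>] 0, ∀ k : ℕ,
    c * (1 - Real.exp (-(ε * (k + 1)))) ≤ ‖1 - z * qCpow ε (x + k)‖

lemma exists_eventually_le_norm_one_sub_qCpow {y : ℂ} (hy : y ≠ 0) {a : ℝ} (ha : 0 < a) :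
    ∃ c > 0, ∀ᶠ ε : ℝ in 𝓝[>] 0, c * (1 - Real.exp (-(ε * a))) ≤ ‖1 - qCpow ε y‖ := by
  have hy' : 0 < ‖y‖ := norm_pos_iff.2 hy
  refine ⟨‖y‖ / 2 / a, by positivity, ?_⟩
  filter_upwards [(tendsto_one_sub_qCpow_div y).norm.eventually_const_le (half_lt_self hy'),
    self_mem_nhdsWithin] with ε hlow (hε : 0 < ε)
  rw [norm_div, Complex.norm_of_nonneg hε.le, le_div_iff₀ hε] at hlow
  calc ‖y‖ / 2 / a * (1 - Real.exp (-(ε * a))) ≤ ‖y‖ / 2 / a * (ε * a) := by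
        gcongr
        linarith [Real.add_one_le_exp (-(ε * a))]
    _ = ‖y‖ / 2 * ε := by field_simp
    _ ≤ ‖1 - qCpow ε y‖ := hlow

lemma exists_eventually_forall_ge_le_norm_one_sub_qCpow (x : ℂ) :
    ∃ n : ℕ, ∀ᶠ ε : ℝ in 𝓝[>] 0, ∀ k ≥ n,
      1 / 2 * (1 - Real.exp (-(ε * (k + 1)))) ≤ ‖1 - qCpow ε (x + k)‖ := by
  obtain ⟨C, hC⟩ := (isBigO_qCpow_sub_qCpow 0 (x - 1)).bound
  obtain ⟨n, hn⟩ := exists_nat_ge (2 * C)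
  refine ⟨n, ?_⟩
  filter_upwards [hC, self_mem_nhdsWithin] with ε hCε (hε : 0 < ε) k hk
  set r := Real.exp (-(ε * (k + 1))) with hr
  have hnorm : ‖qCpow ε (k + 1 : ℕ)‖ = r := by rw [norm_qCpow_natCast, hr, Nat.cast_succ]
  have hdecomp : 1 - qCpow ε (x + k) =
      (1 - qCpow ε (k + 1 : ℕ)) + qCpow ε (k + 1 : ℕ) * (qCpow ε 0 - qCpow ε (x - 1)) := by
    rw [mul_sub, ← qCpow_add, ← qCpow_add]
    push_cast
    ring_nf
  have hmain : 1 - r ≤ ‖1 - qCpow ε (k + 1 : ℕ)‖ := by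
    simpa only [norm_one, hnorm] using norm_sub_norm_le 1 (qCpow ε (k + 1 : ℕ))
  have herror : ‖qCpow ε (k + 1 : ℕ) * (qCpow ε 0 - qCpow ε (x - 1))‖ ≤ 1 / 2 * (1 - r) := by
    have hC_le : C ≤ 1 / 2 * (k + 1) := by
      have : (n : ℝ) ≤ k := Nat.cast_le.2 hk
      linarith
    rw [Real.norm_of_nonneg hε.le] at hCε
    calc ‖qCpow ε (k + 1 : ℕ) * (qCpow ε 0 - qCpow ε (x - 1))‖ ≤ r * (C * ε) := by
          rw [norm_mul, hnorm]
          gcongr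
      _ ≤ r * (1 / 2 * (k + 1) * ε) := by gcongr
      _ = 1 / 2 * (ε * (k + 1) * r) := by ring
      _ ≤ 1 / 2 * (1 - r) := by
        gcongr
        exact mul_exp_neg_le_one_sub_exp_neg _
  have htriangle := norm_sub_le_norm_add (1 - qCpow ε (k + 1 : ℕ))
    (qCpow ε (k + 1 : ℕ) * (qCpow ε 0 - qCpow ε (x - 1)))
  rw [hdecomp]
  linarith

lemma factorsBoundedBelow_one {x : ℂ} (hx : ∀ m : ℕ, x ≠ -m) : FactorsBoundedBelow 1 x := by
  obtain ⟨n, hlarge⟩ := exists_eventually_forall_ge_le_norm_one_sub_qCpow x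
  choose c hc hsmall using fun k : ℕ ↦ exists_eventually_le_norm_one_sub_qCpow
    (mt eq_neg_of_add_eq_zero_left (hx k)) (Nat.cast_add_one_pos (α := ℝ) k)
  obtain ⟨d, hdc, hd, hd_half⟩ : ∃ d, (∀ k ∈ Finset.range n, d ∈ Set.Ioc 0 (c k)) ∧
      d ∈ Set.Ioc (0 : ℝ) (1 / 2) :=
    (((Finset.range n).eventually_all.2 fun k _ ↦ Ioc_mem_nhdsGT (hc k)).and
      (Ioc_mem_nhdsGT one_half_pos)).exists
  refine ⟨d, hd, ?_⟩
  filter_upwards [hlarge, (Finset.range n).eventually_all.2 fun k _ ↦ hsmall k,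
    self_mem_nhdsWithin] with ε hlarge hsmall (hε : 0 < ε) k
  have hgap : 0 ≤ 1 - Real.exp (-(ε * (k + 1))) :=
    sub_nonneg.2 (Real.exp_le_one_iff.2 (neg_nonpos.2 (by positivity)))
  rw [one_mul]
  rcases lt_or_ge k n with hk | hk
  · have hk := Finset.mem_range.2 hk
    exact (mul_le_mul_of_nonneg_right (hdc k hk).2 hgap).trans (hsmall k hk)
  · exact (mul_le_mul_of_nonneg_right hd_half hgap).trans (hlarge k hk)

lemma exists_pos_le_norm_one_sub_ofReal_mul {z : ℂ} (hz : 1 - z ∈ Complex.slitPlane) :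
    ∃ c > 0, ∀ r ∈ Set.Icc (0 : ℝ) 1, c ≤ ‖1 - r * z‖ := by
  have hcont : ContinuousOn (fun r : ℝ ↦ ‖1 - r * z‖) (Set.Icc 0 1) := by fun_prop
  obtain ⟨r₀, hr₀, hmin⟩ := isCompact_Icc.exists_isMinOn (Set.nonempty_Icc.2 zero_le_one) hcont
  refine ⟨‖1 - r₀ * z‖, norm_pos_iff.2 (Complex.slitPlane_ne_zero ?_), hmin⟩
  rw [sub_eq_add_neg] at hz
  simpa [sub_eq_add_neg] using
    Complex.starConvex_one_slitPlane.add_smul_mem hz hr₀.1 hr₀.2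

lemma factorsBoundedBelow_of_one_sub_mem_slitPlane {z : ℂ} (hz : 1 - z ∈ Complex.slitPlane)
    (x : ℂ) : FactorsBoundedBelow z x := by
  obtain ⟨c, hc, hseg⟩ := exists_pos_le_norm_one_sub_ofReal_mul hz
  have hlim : Tendsto (fun ε ↦ ‖z * (qCpow ε x - 1)‖) (𝓝[>] 0) (𝓝 0) := by
    simpa using (((tendsto_qCpow x).sub_const 1).const_mul z).norm
  refine ⟨c / 2, half_pos hc, ?_⟩
  filter_upwards [hlim.eventually_le_const (half_pos hc), self_mem_nhdsWithin]
    with ε hsmall (hε : 0 < ε) k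
  set r := Real.exp (-(ε * k)) with hr
  have hr_le : r ≤ 1 := Real.exp_le_one_iff.2 (neg_nonpos.2 (by positivity))
  have hdecomp : 1 - z * qCpow ε (x + k) = (1 - r * z) - r * (z * (qCpow ε x - 1)) := by
    have hrq : qCpow ε k = r := by simp [qCpow, hr]
    rw [qCpow_add, hrq]
    ring
  have herror : ‖r * (z * (qCpow ε x - 1))‖ ≤ c / 2 := by
    rw [norm_mul, Complex.norm_of_nonneg (Real.exp_pos _).le]
    exact (mul_le_of_le_one_left (norm_nonneg _) hr_le).trans hsmall
  calc c / 2 * (1 - Real.exp (-(ε * (k + 1)))) ≤ c / 2 :=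
        mul_le_of_le_one_right (half_pos hc).le (sub_le_self _ (Real.exp_pos _).le)
    _ ≤ ‖1 - r * z‖ - ‖r * (z * (qCpow ε x - 1))‖ := by
        linarith [hseg r ⟨(Real.exp_pos _).le, hr_le⟩]
    _ ≤ ‖1 - z * qCpow ε (x + k)‖ := hdecomp ▸ norm_sub_norm_le _ _

end LowerBounds

section DominatedConvergence

lemma qFactor_mul_sub_mul (z α β s t : ℂ) (ε : ℝ) (k : ℕ) :
    (1 - z * qCpow ε (α + s + k)) * (1 - z * qCpow ε (β + t + k)) -
        (1 - z * qCpow ε (β + s + k)) * (1 - z * qCpow ε (α + t + k)) =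
      z * qCpow ε k * ((qCpow ε β - qCpow ε α) * (qCpow ε s - qCpow ε t)) := by
  simp only [qCpow_add]
  ring

lemma norm_crossRatio_qFactor_sub_one_le {z α β s t : ℂ} {ε c₁ c₂ C : ℝ} {k : ℕ}
    (hε : 0 < ε) (hε₁ : ε ≤ 1) (hc₁ : 0 < c₁) (hc₂ : 0 < c₂)
    (hC : ‖(qCpow ε β - qCpow ε α) * (qCpow ε s - qCpow ε t)‖ ≤ C * ε ^ 2)
    (h₁ : c₁ * (1 - Real.exp (-(ε * (k + 1)))) ≤ ‖1 - z * qCpow ε (β + s + k)‖)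
    (h₂ : c₂ * (1 - Real.exp (-(ε * (k + 1)))) ≤ ‖1 - z * qCpow ε (α + t + k)‖) :
    ‖crossRatio (fun x ↦ 1 - z * qCpow ε (x + k)) α β s t - 1‖ ≤
      ‖z‖ * C * Real.exp 1 / (c₁ * c₂) / ((k : ℝ) + 1) ^ 2 := by
  set y := ε * ((k : ℝ) + 1) with hy
  have hy_pos : 0 < y := by positivity
  have hC_nonneg : 0 ≤ C := nonneg_of_mul_nonneg_left ((norm_nonneg _).trans hC) (by positivity)
  have hgap : 0 < 1 - Real.exp (-y) := sub_pos.2 (Real.exp_lt_one_iff.2 (neg_lt_zero.2 hy_pos))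
  have hden₁ : 0 < ‖1 - z * qCpow ε (β + s + k)‖ := (mul_pos hc₁ hgap).trans_le h₁
  have hden₂ : 0 < ‖1 - z * qCpow ε (α + t + k)‖ := (mul_pos hc₂ hgap).trans_le h₂
  have hexp : Real.exp (-(ε * k)) ≤ Real.exp 1 * Real.exp (-y) := by
    rw [← Real.exp_add, Real.exp_le_exp]
    linarith
  have hsub := crossRatio_sub_one (f := fun x ↦ 1 - z * qCpow ε (x + k))
    (norm_pos_iff.1 hden₁) (norm_pos_iff.1 hden₂)
  rw [hsub, qFactor_mul_sub_mul, norm_div, norm_mul, norm_mul, norm_mul (1 - _),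
    norm_qCpow_natCast, div_le_iff₀ (mul_pos hden₁ hden₂)]
  calc ‖z‖ * Real.exp (-(ε * k)) * ‖(qCpow ε β - qCpow ε α) * (qCpow ε s - qCpow ε t)‖
      ≤ ‖z‖ * (Real.exp 1 * Real.exp (-y)) * (C * ε ^ 2) := by gcongr
    _ = ‖z‖ * C * Real.exp 1 / (c₁ * c₂) / ((k : ℝ) + 1) ^ 2 *
          (c₁ * c₂ * (y ^ 2 * Real.exp (-y))) := by rw [hy]; field_simp
    _ ≤ ‖z‖ * C * Real.exp 1 / (c₁ * c₂) / ((k : ℝ) + 1) ^ 2 *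
          (c₁ * c₂ * (1 - Real.exp (-y)) ^ 2) := by
        gcongr
        exact sq_mul_exp_neg_le_sq_one_sub_exp_neg hy_pos.le
    _ = ‖z‖ * C * Real.exp 1 / (c₁ * c₂) / ((k : ℝ) + 1) ^ 2 *
          (c₁ * (1 - Real.exp (-y)) * (c₂ * (1 - Real.exp (-y)))) := by ring
    _ ≤ ‖z‖ * C * Real.exp 1 / (c₁ * c₂) / ((k : ℝ) + 1) ^ 2 *
          (‖1 - z * qCpow ε (β + s + k)‖ * ‖1 - z * qCpow ε (α + t + k)‖) := by gcongr

lemma FactorsBoundedBelow.eventually_ne_zero {z x : ℂ} (h : FactorsBoundedBelow z x) :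
    ∀ᶠ ε in 𝓝[>] 0, ∀ k : ℕ, 1 - z * qCpow ε (x + k) ≠ 0 := by
  obtain ⟨c, hc, hbound⟩ := h
  filter_upwards [hbound, self_mem_nhdsWithin] with ε hbound (hε : 0 < ε) k
  have hgap : 0 < 1 - Real.exp (-(ε * (k + 1))) :=
    sub_pos.2 (Real.exp_lt_one_iff.2 (neg_lt_zero.2 (by positivity)))
  exact norm_pos_iff.1 ((mul_pos hc hgap).trans_le (hbound k))

lemma exists_eventually_norm_crossRatio_qFactor_sub_one_le {z α β s t : ℂ}
    (h₁ : FactorsBoundedBelow z (β + s)) (h₂ : FactorsBoundedBelow z (α + t)) :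
    ∃ M : ℝ, ∀ᶠ ε in 𝓝[>] 0, ∀ k : ℕ,
      ‖crossRatio (fun x ↦ 1 - z * qCpow ε (x + k)) α β s t - 1‖ ≤ M / ((k : ℝ) + 1) ^ 2 := by
  obtain ⟨c₁, hc₁, hbound₁⟩ := h₁
  obtain ⟨c₂, hc₂, hbound₂⟩ := h₂
  obtain ⟨C, hC⟩ := ((isBigO_qCpow_sub_qCpow β α).mul (isBigO_qCpow_sub_qCpow s t)).bound
  refine ⟨‖z‖ * C * Real.exp 1 / (c₁ * c₂), ?_⟩
  filter_upwards [hbound₁, hbound₂, hC, Ioc_mem_nhdsGT one_pos] with ε hbound₁ hbound₂ hC hε k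
  rw [← sq, Real.norm_of_nonneg (sq_nonneg ε)] at hC
  exact norm_crossRatio_qFactor_sub_one_le hε.1 hε.2 hc₁ hc₂ hC (hbound₁ k) (hbound₂ k)

lemma crossRatio_qPochInf_eq_tprod {z α β s t : ℂ} {ε : ℝ} (hε : 0 < ε)
    (h₁ : ∀ k : ℕ, 1 - z * qCpow ε (β + s + k) ≠ 0)
    (h₂ : ∀ k : ℕ, 1 - z * qCpow ε (α + t + k) ≠ 0) :
    crossRatio (fun x ↦ qPochInf (z * qCpow ε x) (qCpow ε 1)) α β s t =
      ∏' k : ℕ, crossRatio (fun x ↦ 1 - z * qCpow ε (x + k)) α β s t := by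
  have hfactor (x : ℂ) (k : ℕ) :
      z * qCpow ε (x + k) = z * qCpow ε x * qCpow ε 1 ^ k := by
    rw [qCpow_add, qCpow_natCast, mul_assoc]
  simp only [hfactor] at h₁ h₂ ⊢
  have hq := norm_qCpow_one_lt_one hε
  exact (hasProd_crossRatio (fun x ↦ hasProd_qPochInf hq (z * qCpow ε x))
    (qPochInf_ne_zero hq h₁) (qPochInf_ne_zero hq h₂)).tprod_eq.symm

theorem tendsto_crossRatio_qPochInf {z α β s t : ℂ} {g : ℕ → ℂ}
    (h₁ : FactorsBoundedBelow z (β + s)) (h₂ : FactorsBoundedBelow z (α + t))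
    (hlim : ∀ k : ℕ, Tendsto (fun ε ↦ crossRatio (fun x ↦ 1 - z * qCpow ε (x + k)) α β s t)
      (𝓝[>] 0) (𝓝 (g k))) :
    Tendsto (fun ε ↦ crossRatio (fun x ↦ qPochInf (z * qCpow ε x) (qCpow ε 1)) α β s t)
      (𝓝[>] 0) (𝓝 (∏' k, g k)) := by
  obtain ⟨M, hM⟩ := exists_eventually_norm_crossRatio_qFactor_sub_one_le h₁ h₂
  have hsum : Summable fun k : ℕ ↦ M / ((k : ℝ) + 1) ^ 2 := by
    have := (summable_nat_add_iff 1).2 (Real.summable_one_div_nat_pow.2 one_lt_two)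
    simpa [div_eq_mul_inv] using this.mul_left M
  have hprod := tendsto_tprod_one_add_of_dominated_convergence hsum
    (fun k ↦ (hlim k).sub_const 1) hM
  simp only [add_sub_cancel] at hprod
  refine hprod.congr' ?_
  filter_upwards [h₁.eventually_ne_zero, h₂.eventually_ne_zero, self_mem_nhdsWithin]
    with ε hne₁ hne₂ hε using (crossRatio_qPochInf_eq_tprod hε hne₁ hne₂).symm

theorem tendsto_crossRatio_qPochInf_Gamma {α β s t : ℂ} (hαs : ∀ m : ℕ, α + s ≠ -m)
    (hβt : ∀ m : ℕ, β + t ≠ -m) (hβs : ∀ m : ℕ, β + s ≠ -m) (hαt : ∀ m : ℕ, α + t ≠ -m) :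
    Tendsto (fun ε ↦ crossRatio (fun x ↦ qPochInf (qCpow ε x) (qCpow ε 1)) α β s t)
      (𝓝[>] 0) (𝓝 (crossRatio Complex.Gamma β α s t)) := by
  suffices hfactor : ∀ k : ℕ,
      Tendsto (fun ε ↦ crossRatio (fun x ↦ 1 - 1 * qCpow ε (x + k)) α β s t) (𝓝[>] 0)
        (𝓝 (crossRatio (fun x ↦ x + (k : ℂ)) α β s t)) by
    simpa only [one_mul, tprod_crossRatio_add_natCast hαs hβt hβs hαt] using
      tendsto_crossRatio_qPochInf (factorsBoundedBelow_one hβs) (factorsBoundedBelow_one hαt)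
        hfactor
  intro k
  have hrescaled := tendsto_crossRatio (fun x ↦ tendsto_one_sub_qCpow_div (x + k))
    (mt eq_neg_of_add_eq_zero_left (hβs k)) (mt eq_neg_of_add_eq_zero_left (hαt k))
  refine hrescaled.congr' ?_
  filter_upwards [self_mem_nhdsWithin] with ε (hε : 0 < ε)
  rw [crossRatio_div_const _ (Complex.ofReal_ne_zero.2 hε.ne')]
  simp only [one_mul]

theorem tendsto_crossRatio_qPochInf_one {z : ℂ} (hz : 1 - z ∈ Complex.slitPlane) (α β s t : ℂ) :
    Tendsto (fun ε ↦ crossRatio (fun x ↦ qPochInf (z * qCpow ε x) (qCpow ε 1)) α β s t)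
      (𝓝[>] 0) (𝓝 1) := by
  have hz₀ : 1 - z ≠ 0 := Complex.slitPlane_ne_zero hz
  have hfactor (k : ℕ) :
      Tendsto (fun ε ↦ crossRatio (fun x ↦ 1 - z * qCpow ε (x + k)) α β s t) (𝓝[>] 0) (𝓝 1) := by
    have hconst : crossRatio (fun _ ↦ 1 - z) α β s t = 1 := div_self (mul_ne_zero hz₀ hz₀)
    have hlim (x : ℂ) : Tendsto (fun ε ↦ 1 - z * qCpow ε (x + k)) (𝓝[>] 0) (𝓝 (1 - z)) := by
      simpa only [mul_one] using ((tendsto_qCpow (x + k)).const_mul z).const_sub 1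
    have hratio := tendsto_crossRatio (α := α) (β := β) (s := s) (t := t) hlim hz₀ hz₀
    rwa [hconst] at hratio
  simpa only [tprod_one] using
    tendsto_crossRatio_qPochInf (factorsBoundedBelow_of_one_sub_mem_slitPlane hz _)
      (factorsBoundedBelow_of_one_sub_mem_slitPlane hz _) hfactor

end DominatedConvergence

section WeakAsymmetry

lemma ofReal_qN (N : ℕ) : (qN N : ℂ) = qCpow (2 / √N) 1 := by
  simp [qN, qCpow, neg_div]

lemma qpow_eq_qCpow (N : ℕ) (x : ℝ) : qpow N x = qCpow (2 / √N) x := by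
  simp only [qpow, qCpow]
  push_cast
  ring_nf

lemma tendsto_two_div_sqrt_natCast : Tendsto (fun N : ℕ ↦ 2 / √(N : ℝ)) atTop (𝓝[>] 0) := by
  refine tendsto_nhdsWithin_iff.2
    ⟨(Real.tendsto_sqrt_atTop.comp tendsto_natCast_atTop_atTop).const_div_atTop 2, ?_⟩
  filter_upwards [eventually_gt_atTop 0] with N hN
  exact div_pos two_pos (Real.sqrt_pos.2 (Nat.cast_pos.2 hN))

theorem statement8_general {α β s t : ℝ} (hαs : ∀ m : ℕ, α + s ≠ -m)
    (hβt : ∀ m : ℕ, β + t ≠ -m) (hβs : ∀ m : ℕ, β + s ≠ -m) (hαt : ∀ m : ℕ, α + t ≠ -m)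
    (γ δ : ℝ) :
    Tendsto (fun N : ℕ ↦
      (qPochInf (qpow N (α + s)) (qN N) * qPochInf (-(qpow N (γ + s))) (qN N) *
       qPochInf (qpow N (β + t)) (qN N) * qPochInf (-(qpow N (δ + t))) (qN N)) /
      (qPochInf (qpow N (β + s)) (qN N) * qPochInf (-(qpow N (δ + s))) (qN N) *
       qPochInf (qpow N (α + t)) (qN N) * qPochInf (-(qpow N (γ + t))) (qN N)))
      atTop
      (𝓝 (Complex.Gamma ((β + s : ℝ) : ℂ) * Complex.Gamma ((α + t : ℝ) : ℂ) /
        (Complex.Gamma ((α + s : ℝ) : ℂ) * Complex.Gamma ((β + t : ℝ) : ℂ)))) := by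
  have hGamma := tendsto_crossRatio_qPochInf_Gamma (α := α) (β := β) (s := s) (t := t)
    (mod_cast hαs) (mod_cast hβt) (mod_cast hβs) (mod_cast hαt)
  have hneg : (1 : ℂ) - -1 ∈ Complex.slitPlane := by norm_num [Complex.mem_slitPlane_iff]
  have hone := tendsto_crossRatio_qPochInf_one hneg γ δ s t
  have hlim := (hGamma.mul hone).comp tendsto_two_div_sqrt_natCast
  simp only [mul_one, neg_one_mul, crossRatio, Function.comp_def] at hlim
  simp only [qpow_eq_qCpow, ofReal_qN, Complex.ofReal_add]
  refine hlim.congr fun N ↦ ?_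
  rw [div_mul_div_comm]
  ring

end WeakAsymmetry

theorem statement8 (u v w s t : ℝ) (k : ℕ) (huv : 0 < u + v) (hst : s < t)
    (hk : u + (k : ℝ) - s / 2 < 0) :
    Tendsto (fun N : ℕ =>
      (qPochInf (qpow N (-2 * u - 2 * k + s)) (qN N) * qPochInf (-(qpow N (v + w + s))) (qN N) *
       qPochInf (qpow N (v - u - k + t)) (qN N) * qPochInf (-(qpow N (w - u - k + t))) (qN N)) /
      (qPochInf (qpow N (v - u - k + s)) (qN N) * qPochInf (-(qpow N (w - u - k + s))) (qN N) *
       qPochInf (qpow N (-2 * u - 2 * k + t)) (qN N) * qPochInf (-(qpow N (v + w + t))) (qN N)))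
      atTop
      (nhds (Complex.Gamma ((v - u - k + s : ℝ) : ℂ) * Complex.Gamma ((-2 * u - 2 * k + t : ℝ) : ℂ) /
        (Complex.Gamma ((-2 * u - 2 * k + s : ℝ) : ℂ) * Complex.Gamma ((v - u - k + t : ℝ) : ℂ)))) := by
  refine statement8_general ?_ ?_ ?_ ?_ (v + w) (w - u - k) <;>
    exact fun m ↦ ((neg_nonpos.2 m.cast_nonneg).trans_lt (by linarith)).ne'
end

section
/- Fix real numbers u, v, w, s, t, ρ with u+v > 0, w > 0, s < t, u − t/2 < 0 and ρ > 0, and let j be a natural number with j ≤ −u + t/2. For each positive integer N with 4N > ρ, let q = q_N = exp(−2/√N) and θ = arccos(1 − ρ/(2N)). Then the limit as N → ∞ of [ (q;q)_∞ (−q^{v+w+s};q)_∞ (q^{j+v+u};q)_∞ (q^{v−j−u+t};q)_∞ (−q^{w+j+u};q)_∞ (−q^{w−j−u+t};q)_∞ (q^{t−s};q)_∞ · (e^{2iθ};q)_∞ (e^{−2iθ};q)_∞ ] / [ 4πN √(ρ/N) √(1 − ρ/(4N)) · (−q^{v+w+t};q)_∞ · ∏_{σ∈{+1,−1}} (q^{v+s/2}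 e^{σiθ};q)_∞ (−q^{w+s/2} e^{σiθ};q)_∞ (q^{j+u−s/2} e^{σiθ};q)_∞ (q^{t−s/2−j−u} e^{σiθ};q)_∞ ] exists and equals |Γ(v+s/2+i√ρ/2)|² · |Γ(j+u−s/2+i√ρ/2)|² · |Γ(t−s/2−j−u+i√ρ/2)|² / ( 8π √ρ · Γ(j+v+u) Γ(v−j−u+t) Γ(t−s) · |Γ(i√ρ)|² ). -/
open Filter

/-- `e^{ix}` for real `x`. -/
noncomputable def eI (x : ℝ) : ℂ := Complex.exp (Complex.I * x)

/-- `|Γ(a+ib)|² := Γ(a+ib)·Γ(a−ib)` for real `a, b`. -/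
noncomputable def GammaSq (a b : ℝ) : ℂ :=
  Complex.Gamma ((a : ℂ) + (b : ℂ) * Complex.I) * Complex.Gamma ((a : ℂ) - (b : ℂ) * Complex.I)

/-!
Write `q = e^{-ε}` with `ε = 2 / √N` and `θ = ε x`, so that `x → √ρ / 2` and
`e^{±iθ} = q ^ (∓ix)`. Every `q`-Pochhammer symbol is then `(σ q ^ z; q)_∞` with `σ = ±1`, and up to
the factor `(σ q; q)_∞ (1 - σ q) ^ (1 - z)` it is a reciprocal `q`-Gamma function. In the
Askey–Wilson weight these factors cancel except for a single `1 / (1 - q)`, which the prefactor of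
order `1 / ε` absorbs.

For `Re z ≥ 1` the reciprocal `q`-Gamma function is the exponential of a series of differences of
`x ↦ log (1 - σ q ^ x)`. Its second derivative is at most `1 / (Re x) ^ 2`, uniformly in `q`, so the
`k`-th term is `O(1 / (k + 1) ^ 2)` and dominated convergence applies: as `q → 1` the summand
becomes that of `-log Γ(z)` if `σ = 1`, and `0` if `σ = -1`. The functional equation carries the
limits `1 / Γ(z)` and `1` over to all `z`.
-/

section Taylor

variable {𝕜 E : Type*} [RCLike 𝕜] [NormedAddCommGroup E] [NormedSpace 𝕜 E]

lemma norm_sub_sub_smul_le_of_hasDerivAt_of_convex {f f' f'' : 𝕜 → E} {S : Set 𝕜}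
    (hS : Convex ℝ S) {M : ℝ} (hf : ∀ x ∈ S, HasDerivAt f (f' x) x)
    (hf' : ∀ x ∈ S, HasDerivAt f' (f'' x) x) (hM : ∀ x ∈ S, ‖f'' x‖ ≤ M) {a b : 𝕜}
    (ha : a ∈ S) (hb : b ∈ S) :
    ‖f b - f a - (b - a) • f' a‖ ≤ M * ‖b - a‖ ^ 2 := by
  have hM0 : 0 ≤ M := (norm_nonneg _).trans (hM a ha)
  have hseg : segment ℝ a b ⊆ S := hS.segment_subset ha hb
  have hlip : ∀ x ∈ segment ℝ a b, ‖f' x - f' a‖ ≤ M * ‖b - a‖ := fun x hx =>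
    (hS.norm_image_sub_le_of_norm_hasDerivWithin_le
      (fun y hy => (hf' y hy).hasDerivWithinAt) hM ha (hseg hx)).trans
      (mul_le_mul_of_nonneg_left (norm_sub_le_of_mem_segment hx) hM0)
  have hmv := (convex_segment (𝕜 := ℝ) a b).norm_image_sub_le_of_norm_hasDerivWithin_le
    (f := fun x => f x - x • f' a)
    (fun y hy => ((hf y (hseg hy)).sub
      ((hasDerivAt_id y).smul_const (f' a))).hasDerivWithinAt)
    (fun y hy => by simpa only [one_smul] using hlip y hy)
    (left_mem_segment ℝ a b) (right_mem_segment ℝ a b)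
  calc ‖f b - f a - (b - a) • f' a‖ = ‖f b - b • f' a - (f a - a • f' a)‖ := by
        rw [sub_smul]; congr 1; abel
    _ ≤ M * ‖b - a‖ * ‖b - a‖ := hmv
    _ = M * ‖b - a‖ ^ 2 := by ring

end Taylor

section EulerTerm

open Complex Topology

lemma natCast_add_re_pos {z : ℂ} (hz : 0 < z.re) (k : ℕ) : 0 < ((k : ℂ) + z).re := by
  rw [add_re, natCast_re]; positivity

/-- The `k`-th term `f (k + z) - f (k + 1) - (z - 1) * (f (k + 2) - f (k + 1))` of Euler's way of
extending `n ↦ ∑ k < n, f (k + 1)` to complex arguments. For `f = log` the sum over `k` is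
`-log Γ(z)`, for `f x = log (1 - q ^ x)` it is minus the logarithm of the `q`-Gamma function. -/
noncomputable def eulerTerm (f : ℂ → ℂ) (z : ℂ) (k : ℕ) : ℂ :=
  f (k + z) - f (k + 1) - (z - 1) * (f (k + 2) - f (k + 1))

lemma eulerTerm_sub_const (f : ℂ → ℂ) (c z : ℂ) (k : ℕ) :
    eulerTerm (fun x => f x - c) z k = eulerTerm f z k := by
  unfold eulerTerm; ring

lemma sum_range_eulerTerm (f : ℂ → ℂ) (z : ℂ) (n : ℕ) :
    ∑ k ∈ Finset.range n, eulerTerm f z k =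
      ∑ k ∈ Finset.range n, f (k + z) - ∑ k ∈ Finset.range n, f (k + 1)
        - (z - 1) * (f (n + 1) - f 1) := by
  have htele : ∑ k ∈ Finset.range n, (f (k + 2) - f (k + 1)) = f (n + 1) - f 1 := by
    simpa [add_assoc, one_add_one_eq_two] using
      Finset.sum_range_sub (fun k : ℕ => f (k + 1)) n
  simp only [eulerTerm]
  rw [Finset.sum_sub_distrib, Finset.sum_sub_distrib, ← Finset.mul_sum, htele]

lemma tsum_eulerTerm {f : ℂ → ℂ} (hf : ∀ z, Summable fun k : ℕ => f (k + z)) (z : ℂ) :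
    ∑' k, eulerTerm f z k = ∑' k : ℕ, f (k + z) - ∑' k : ℕ, f (k + 1) + (z - 1) * f 1 := by
  have hshift : ∑' k : ℕ, f (k + 1) = f 1 + ∑' k : ℕ, f (k + 2) := by
    rw [(hf 1).tsum_eq_zero_add]
    congr 2
    · norm_num
    · funext k; congr 1; push_cast; ring
  simp only [eulerTerm]
  rw [((hf z).sub (hf 1)).tsum_sub (((hf 2).sub (hf 1)).mul_left _), (hf z).tsum_sub (hf 1),
    tsum_mul_left, (hf 2).tsum_sub (hf 1), hshift]
  ring

lemma norm_eulerTerm_le {f f' f'' : ℂ → ℂ} (hf : ∀ x : ℂ, 0 < x.re → HasDerivAt f (f' x) x)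
    (hf' : ∀ x : ℂ, 0 < x.re → HasDerivAt f' (f'' x) x)
    (hf'' : ∀ x : ℂ, 0 < x.re → ‖f'' x‖ ≤ 1 / x.re ^ 2) {z : ℂ} (hz : 1 ≤ z.re) (k : ℕ) :
    ‖eulerTerm f z k‖ ≤ (‖z - 1‖ ^ 2 + ‖z - 1‖) * (1 / ((k : ℝ) + 1) ^ 2) := by
  have hk : (0 : ℝ) < k + 1 := by positivity
  have htaylor : ∀ w : ℂ, 0 ≤ w.re →
      ‖f (k + 1 + w) - f (k + 1) - w * f' (k + 1)‖ ≤ 1 / ((k : ℝ) + 1) ^ 2 * ‖w‖ ^ 2 := by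
    intro w hw
    have := norm_sub_sub_smul_le_of_hasDerivAt_of_convex
      (convex_halfSpace_re_ge ((k : ℝ) + 1)) (fun x hx => hf x (hk.trans_le hx))
      (fun x hx => hf' x (hk.trans_le hx)) (M := 1 / ((k : ℝ) + 1) ^ 2)
      (fun x hx => (hf'' x (hk.trans_le hx)).trans
        (one_div_le_one_div_of_le (by positivity) (pow_le_pow_left₀ hk.le hx 2)))
      (a := k + 1) (b := k + 1 + w) (by simp) (by simpa using hw)
    simpa only [add_sub_cancel_left, smul_eq_mul] using this
  have hz1 := htaylor (z - 1) (by simpa using hz)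
  have h11 := htaylor 1 (by simp)
  have hsplit : eulerTerm f z k = (f (k + 1 + (z - 1)) - f (k + 1) - (z - 1) * f' (k + 1))
      - (z - 1) * (f (k + 1 + 1) - f (k + 1) - 1 * f' (k + 1)) := by
    rw [eulerTerm, show (k : ℂ) + 1 + (z - 1) = k + z by ring,
      show (k : ℂ) + 1 + 1 = k + 2 by ring]
    ring
  calc ‖eulerTerm f z k‖
      ≤ 1 / ((k : ℝ) + 1) ^ 2 * ‖z - 1‖ ^ 2
          + ‖z - 1‖ * (1 / ((k : ℝ) + 1) ^ 2 * ‖(1 : ℂ)‖ ^ 2) := by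
        rw [hsplit]
        refine (norm_sub_le _ _).trans (add_le_add hz1 ?_)
        rw [norm_mul]
        gcongr
    _ = (‖z - 1‖ ^ 2 + ‖z - 1‖) * (1 / ((k : ℝ) + 1) ^ 2) := by rw [norm_one]; ring

lemma summable_one_div_natCast_add_one_sq : Summable fun k : ℕ => 1 / ((k : ℝ) + 1) ^ 2 := by
  simpa only [Nat.cast_add, Nat.cast_one] using
    (summable_nat_add_iff 1).2 (Real.summable_one_div_nat_pow.2 one_lt_two)

lemma summable_eulerTerm_log {z : ℂ} (hz : 1 ≤ z.re) : Summable (eulerTerm log z) := by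
  refine .of_norm_bounded (summable_one_div_natCast_add_one_sq.mul_left _) fun k =>
    norm_eulerTerm_le (f' := fun x => x⁻¹) (f'' := fun x => -(x ^ 2)⁻¹)
      (fun x hx => hasDerivAt_log (Or.inl hx))
      (fun x hx => hasDerivAt_inv (slitPlane_ne_zero (Or.inl hx))) (fun x hx => ?_) hz k
  rw [norm_neg, norm_inv, norm_pow, ← one_div]
  exact one_div_le_one_div_of_le (by positivity)
    (pow_le_pow_left₀ hx.le ((le_abs_self _).trans (abs_re_le_norm x)) 2)

lemma exp_sum_range_eulerTerm_log {z : ℂ} (hz : 0 < z.re) (n : ℕ) :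
    exp (∑ k ∈ Finset.range n, eulerTerm log z k) =
      (∏ k ∈ Finset.range n, (z + k)) / (n.factorial : ℂ) * (n + 1 : ℂ) ^ (1 - z) := by
  have hprod : ∀ w : ℂ, 0 < w.re →
      exp (∑ k ∈ Finset.range n, log (k + w)) = ∏ k ∈ Finset.range n, (w + k) := by
    intro w hw
    rw [exp_sum]
    refine Finset.prod_congr rfl fun k _ => ?_
    rw [exp_log (slitPlane_ne_zero (Or.inl (natCast_add_re_pos hw k))), add_comm]
  have hfact : ∏ k ∈ Finset.range n, (1 + k : ℂ) = n.factorial := by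
    rw [← Finset.prod_range_add_one_eq_factorial]
    push_cast
    exact Finset.prod_congr rfl fun k _ => add_comm _ _
  rw [sum_range_eulerTerm, log_one, sub_zero, sub_eq_add_neg, exp_add, exp_sub, hprod z hz,
    hprod 1 (by simp), hfact, cpow_def_of_ne_zero (Nat.cast_add_one_ne_zero n)]
  congr 2
  ring

lemma GammaSeq_mul_exp_sum_range_eulerTerm_log {z : ℂ} (hz : 0 < z.re) {n : ℕ} (hn : n ≠ 0) :
    GammaSeq z n * exp (∑ k ∈ Finset.range n, eulerTerm log z k) =
      ((n / (n + 1) : ℝ) : ℂ) ^ z * ((n / (n + z)) / (n / (n + 1))) := by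
  have hn0 : (n : ℂ) ≠ 0 := Nat.cast_ne_zero.2 hn
  have hn1 : (n : ℂ) + 1 ≠ 0 := Nat.cast_add_one_ne_zero n
  have hne : ∀ k : ℕ, z + k ≠ 0 := fun k => by
    rw [add_comm]; exact slitPlane_ne_zero (Or.inl (natCast_add_re_pos hz k))
  have hfact : (n.factorial : ℂ) ≠ 0 := Nat.cast_ne_zero.2 n.factorial_ne_zero
  have hprod : ∏ k ∈ Finset.range n, (z + k) ≠ 0 := Finset.prod_ne_zero_iff.2 fun k _ => hne k
  have hpow : (n + 1 : ℂ) ^ z ≠ 0 := fun h => hn1 ((cpow_eq_zero_iff _ _).1 h).1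
  have hdiv : ((n / (n + 1) : ℝ) : ℂ) ^ z = (n : ℂ) ^ z / (n + 1 : ℂ) ^ z := by
    have := div_cpow_ofReal_nonneg (a := n) (b := n + 1) (by positivity) (by positivity) z
    push_cast at this ⊢
    exact this
  rw [exp_sum_range_eulerTerm_log hz, GammaSeq, Finset.prod_range_succ, cpow_sub _ _ hn1,
    cpow_one, hdiv, add_comm (n : ℂ) z]
  have := hne n
  field_simp

lemma exp_tsum_eulerTerm_log {z : ℂ} (hz : 1 ≤ z.re) :
    exp (∑' k, eulerTerm log z k) = (Gamma z)⁻¹ := by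
  have hre : 0 < z.re := one_pos.trans_le hz
  have hbase : Tendsto (fun n : ℕ => ((n / (n + 1) : ℝ) : ℂ) ^ z) atTop (𝓝 1) := by
    have hone := (continuous_ofReal.tendsto 1).comp (tendsto_natCast_div_add_atTop (1 : ℝ))
    simpa using hone.cpow tendsto_const_nhds (by simp)
  have hquot : Tendsto (fun n : ℕ => ((n : ℂ) / (n + z)) / (n / (n + 1))) atTop (𝓝 1) := by
    simpa only [div_one, Pi.div_def] using
      (tendsto_natCast_div_add_atTop z).div (tendsto_natCast_div_add_atTop 1) one_ne_zero
  have hone : Tendsto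
      (fun n => GammaSeq z n * exp (∑ k ∈ Finset.range n, eulerTerm log z k)) atTop (𝓝 1) := by
    refine (mul_one (1 : ℂ) ▸ hbase.mul hquot).congr' ?_
    filter_upwards [eventually_ne_atTop 0] with n hn
    exact (GammaSeq_mul_exp_sum_range_eulerTerm_log hre hn).symm
  have hlim := (GammaSeq_tendsto_Gamma z).mul
    (summable_eulerTerm_log hz).hasSum.tendsto_sum_nat.cexp
  exact eq_inv_of_mul_eq_one_right (tendsto_nhds_unique hlim hone)

lemma tendsto_eulerTerm {ι : Type*} {l : Filter ι} {F : ι → ℂ → ℂ} {c : ι → ℂ} {f : ℂ → ℂ}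
    {w : ι → ℂ} {z : ℂ} (hF : ∀ x : ℂ, 0 < x.re → ∀ y : ι → ℂ, Tendsto y l (𝓝 x) →
      Tendsto (fun i => F i (y i) - c i) l (𝓝 (f x)))
    (hw : Tendsto w l (𝓝 z)) (hz : 0 < z.re) (k : ℕ) :
    Tendsto (fun i => eulerTerm (F i) (w i) k) l (𝓝 (eulerTerm f z k)) := by
  have hlim : ∀ (x : ℂ) (y : ι → ℂ), 0 < x.re → Tendsto y l (𝓝 x) →
      Tendsto (fun i => F i (k + y i) - c i) l (𝓝 (f (k + x))) := fun x y hx hy =>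
    hF _ (natCast_add_re_pos hx k) _ (hy.const_add _)
  have h1 := hlim 1 _ (by simp) tendsto_const_nhds
  have h2 := hlim 2 _ (by simp) tendsto_const_nhds
  exact (((hlim z w hz hw).sub h1).sub ((hw.sub_const 1).mul (h2.sub h1))).congr fun i =>
    eulerTerm_sub_const (F i) (c i) (w i) k

end EulerTerm

section LogFactor

open Complex Topology

/-- The logarithm of the factor `1 - σ q ^ x` of a `q`-Pochhammer symbol with base `q = e^{-ε}`. -/
noncomputable def logFactor (σ : ℂ) (ε : ℝ) (x : ℂ) : ℂ := log (1 - σ * exp (-(ε * x)))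

variable {σ : ℂ} {ε : ℝ} {x : ℂ}

lemma one_sub_mul_exp_mem_slitPlane (hσ : ‖σ‖ ≤ 1) (hε : 0 < ε) (hx : 0 < x.re) :
    1 - σ * exp (-(ε * x)) ∈ slitPlane := by
  rw [sub_eq_add_neg]
  refine mem_slitPlane_of_norm_lt_one ?_
  rw [norm_neg, norm_mul, norm_exp, neg_re, re_ofReal_mul]
  exact mul_lt_one_of_nonneg_of_lt_one_right hσ (Real.exp_nonneg _)
    (Real.exp_lt_one_iff.2 (neg_neg_of_pos (mul_pos hε hx)))

lemma exp_half_mul_self_le_exp_sub_one {y : ℝ} (hy : 0 ≤ y) :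
    Real.exp (y / 2) * y ≤ Real.exp y - 1 := by
  have hsinh : Real.exp y - 1 = Real.exp (y / 2) * (2 * Real.sinh (y / 2)) := by
    rw [Real.sinh_eq, mul_div_cancel₀ _ two_ne_zero, mul_sub, ← Real.exp_add, ← Real.exp_add,
      add_halves, add_neg_cancel, Real.exp_zero]
  have := Real.self_le_sinh_iff.2 (div_nonneg hy zero_le_two)
  rw [hsinh]
  gcongr
  linarith

lemma exp_half_mul_le_norm_exp_sub {w : ℂ} (hσ : ‖σ‖ ≤ 1) (hw : 0 ≤ w.re) :
    Real.exp (w.re / 2) * w.re ≤ ‖exp w - σ‖ :=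
  calc Real.exp (w.re / 2) * w.re ≤ Real.exp w.re - 1 := exp_half_mul_self_le_exp_sub_one hw
    _ ≤ ‖exp w‖ - ‖σ‖ := by rw [norm_exp]; gcongr
    _ ≤ ‖exp w - σ‖ := norm_sub_norm_le _ _

lemma exp_sub_ne_zero (hσ : ‖σ‖ ≤ 1) (hε : 0 < ε) (hx : 0 < x.re) : exp (ε * x) - σ ≠ 0 := by
  have hre : 0 < (ε * x : ℂ).re := by rw [re_ofReal_mul]; positivity
  exact norm_pos_iff.1 ((mul_pos (Real.exp_pos _) hre).trans_le
    (exp_half_mul_le_norm_exp_sub hσ hre.le))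

lemma hasDerivAt_logFactor (hσ : ‖σ‖ ≤ 1) (hε : 0 < ε) (hx : 0 < x.re) :
    HasDerivAt (logFactor σ ε) (σ * ε / (exp (ε * x) - σ)) x := by
  have hfactor : HasDerivAt (fun x : ℂ => 1 - σ * exp (-(ε * x)))
      (-(σ * (exp (-(ε * x)) * -(ε * 1)))) x :=
    ((((hasDerivAt_id x).const_mul (ε : ℂ)).neg.cexp).const_mul σ).const_sub 1
  refine (hfactor.clog (one_sub_mul_exp_mem_slitPlane hσ hε hx)).congr_deriv ?_
  have hexp : exp (ε * x) - σ = exp (ε * x) * (1 - σ * exp (-(ε * x))) := by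
    rw [mul_sub, mul_left_comm, ← exp_add, add_neg_cancel, exp_zero, mul_one, mul_one]
  rw [hexp, exp_neg]
  field_simp

lemma hasDerivAt_div_exp_sub (hσ : ‖σ‖ ≤ 1) (hε : 0 < ε) (hx : 0 < x.re) :
    HasDerivAt (fun x : ℂ => σ * ε / (exp (ε * x) - σ))
      (-(σ * ε ^ 2 * exp (ε * x)) / (exp (ε * x) - σ) ^ 2) x := by
  have hden : HasDerivAt (fun x : ℂ => exp (ε * x) - σ) (exp (ε * x) * (ε * 1)) x :=
    ((hasDerivAt_id x).const_mul (ε : ℂ)).cexp.sub_const σ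
  refine ((hasDerivAt_const x (σ * (ε : ℂ))).div hden (exp_sub_ne_zero hσ hε hx)).congr_deriv ?_
  ring

lemma norm_mul_exp_div_exp_sub_sq_le (hσ : ‖σ‖ ≤ 1) (hε : 0 < ε) (hx : 0 < x.re) :
    ‖-(σ * ε ^ 2 * exp (ε * x)) / (exp (ε * x) - σ) ^ 2‖ ≤ 1 / x.re ^ 2 := by
  have hre : (ε * x : ℂ).re = ε * x.re := re_ofReal_mul _ _
  have hnum : ‖-(σ * ε ^ 2 * exp (ε * x))‖ ≤ ε ^ 2 * Real.exp (ε * x.re) := by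
    rw [norm_neg, norm_mul, norm_mul, norm_pow, norm_real, Real.norm_of_nonneg hε.le, norm_exp, hre]
    gcongr
    exact mul_le_of_le_one_left (by positivity) hσ
  have hden : Real.exp (ε * x.re) * (ε * x.re) ^ 2 ≤ ‖(exp (ε * x) - σ) ^ 2‖ :=
    calc Real.exp (ε * x.re) * (ε * x.re) ^ 2
        = (Real.exp (ε * x.re / 2) * (ε * x.re)) ^ 2 := by
          rw [mul_pow (Real.exp _), ← Real.exp_nat_mul, Nat.cast_ofNat,
            mul_div_cancel₀ _ two_ne_zero]
      _ ≤ ‖exp (ε * x) - σ‖ ^ 2 := by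
          have := exp_half_mul_le_norm_exp_sub hσ (w := ε * x) (by rw [hre]; positivity)
          rw [hre] at this
          gcongr
      _ = ‖(exp (ε * x) - σ) ^ 2‖ := (norm_pow _ _).symm
  calc ‖-(σ * ε ^ 2 * exp (ε * x)) / (exp (ε * x) - σ) ^ 2‖
      ≤ ε ^ 2 * Real.exp (ε * x.re) / (Real.exp (ε * x.re) * (ε * x.re) ^ 2) := by
        rw [norm_div]
        exact div_le_div₀ (by positivity) hnum (by positivity) hden
    _ = 1 / x.re ^ 2 := by
        have := Real.exp_pos (ε * x.re)
        field_simp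

lemma norm_eulerTerm_logFactor_le {z : ℂ} (hσ : ‖σ‖ ≤ 1) (hε : 0 < ε) (hz : 1 ≤ z.re) (k : ℕ) :
    ‖eulerTerm (logFactor σ ε) z k‖ ≤ (‖z - 1‖ ^ 2 + ‖z - 1‖) * (1 / ((k : ℝ) + 1) ^ 2) :=
  norm_eulerTerm_le (fun _ => hasDerivAt_logFactor hσ hε) (fun _ => hasDerivAt_div_exp_sub hσ hε)
    (fun _ => norm_mul_exp_div_exp_sub_sq_le hσ hε) hz k

end LogFactor

section QGamma

open Complex Topology

/-- `(σ q ^ z; q)_∞` with base `q = e^{-ε}`. -/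
noncomputable def qPochExp (σ : ℂ) (ε : ℝ) (z : ℂ) : ℂ :=
  qPochInf (σ * exp (-(ε * z))) (exp (-(ε : ℂ)))

/-- For `σ = 1` this is the entire function `1 / Γ_q(z)` with base `q = e^{-ε}`. The parameter `σ`
treats the factors `(-q ^ z; q)_∞` on the same footing. -/
noncomputable def recipQGamma (σ : ℂ) (ε : ℝ) (z : ℂ) : ℂ :=
  qPochExp σ ε z / qPochExp σ ε 1 * (1 - σ * exp (-(ε : ℂ))) ^ (z - 1)

variable {σ : ℂ} {ε : ℝ} {z : ℂ}

lemma mul_exp_mul_exp_pow (σ : ℂ) (ε : ℝ) (z : ℂ) (k : ℕ) :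
    σ * exp (-(ε * z)) * exp (-(ε : ℂ)) ^ k = σ * exp (-(ε * (k + z))) := by
  rw [← exp_nat_mul, mul_assoc, ← exp_add]
  ring_nf

lemma norm_exp_neg_ofReal_lt_one (hε : 0 < ε) : ‖exp (-(ε : ℂ))‖ < 1 := by
  rw [norm_exp, neg_re, ofReal_re]
  exact Real.exp_lt_one_iff.2 (neg_neg_of_pos hε)

lemma summable_logFactor (hε : 0 < ε) : Summable fun k : ℕ => logFactor σ ε (k + z) := by
  have hgeom := (summable_geometric_of_norm_lt_one (norm_exp_neg_ofReal_lt_one hε)).mul_left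
    (-(σ * exp (-(ε * z))))
  refine (summable_log_one_add_of_summable hgeom).congr fun k => ?_
  rw [logFactor, neg_mul, mul_exp_mul_exp_pow, ← sub_eq_add_neg]

lemma qPochExp_eq_exp_tsum (hσ : ‖σ‖ ≤ 1) (hε : 0 < ε) (hz : 0 < z.re) :
    qPochExp σ ε z = exp (∑' k : ℕ, logFactor σ ε (k + z)) := by
  rw [qPochExp, qPochInf]
  simp only [mul_exp_mul_exp_pow]
  exact (cexp_tsum_eq_tprod (fun k => slitPlane_ne_zero
    (one_sub_mul_exp_mem_slitPlane hσ hε (natCast_add_re_pos hz k)))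
    (summable_logFactor hε)).symm

lemma qPochExp_one_ne_zero (hσ : ‖σ‖ ≤ 1) (hε : 0 < ε) : qPochExp σ ε 1 ≠ 0 := by
  rw [qPochExp_eq_exp_tsum hσ hε (by simp)]
  exact exp_ne_zero _

lemma one_sub_mul_exp_neg_ne_zero (hσ : ‖σ‖ ≤ 1) (hε : 0 < ε) :
    1 - σ * exp (-(ε : ℂ)) ≠ 0 := by
  simpa only [mul_one] using
    slitPlane_ne_zero (one_sub_mul_exp_mem_slitPlane (x := 1) hσ hε (by simp))

lemma recipQGamma_eq_exp_tsum (hσ : ‖σ‖ ≤ 1) (hε : 0 < ε) (hz : 0 < z.re) :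
    recipQGamma σ ε z = exp (∑' k, eulerTerm (logFactor σ ε) z k) := by
  rw [recipQGamma, qPochExp_eq_exp_tsum hσ hε hz, qPochExp_eq_exp_tsum hσ hε (by simp),
    cpow_def_of_ne_zero (one_sub_mul_exp_neg_ne_zero hσ hε), ← exp_sub, ← exp_add,
    tsum_eulerTerm fun _ => summable_logFactor hε, logFactor, mul_one, mul_comm (log _)]

lemma qPochExp_eq_recipQGamma_mul (hσ : ‖σ‖ ≤ 1) (hε : 0 < ε) (z : ℂ) :
    qPochExp σ ε z =
      recipQGamma σ ε z * qPochExp σ ε 1 * (1 - σ * exp (-(ε : ℂ))) ^ (1 - z) := by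
  have hq := one_sub_mul_exp_neg_ne_zero hσ hε
  have hpow : (1 - σ * exp (-(ε : ℂ))) ^ (z - 1) * (1 - σ * exp (-(ε : ℂ))) ^ (1 - z) = 1 := by
    rw [← cpow_add _ _ hq, sub_add_sub_cancel, sub_self, cpow_zero]
  rw [recipQGamma, mul_right_comm (_ / _), div_mul_cancel₀ _ (qPochExp_one_ne_zero hσ hε),
    mul_assoc, hpow, mul_one]

lemma qPochInf_eq_one_sub_mul (a : ℂ) {q : ℂ} (hq : ‖q‖ < 1) :
    qPochInf a q = (1 - a) * qPochInf (a * q) q := by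
  have hshift : ∀ k : ℕ, 1 + -(a * q) * q ^ k = 1 - a * q ^ (k + 1) := fun k => by ring
  have hmul : Multipliable fun k : ℕ => 1 - a * q ^ (k + 1) :=
    (Complex.multipliable_one_add_of_summable
      ((summable_geometric_of_norm_lt_one hq).mul_left (-(a * q)))).congr hshift
  rw [qPochInf, qPochInf, tprod_eq_zero_mul' (f := fun k : ℕ => 1 - a * q ^ k) hmul, pow_zero,
    mul_one]
  simp only [pow_succ', mul_assoc]

lemma recipQGamma_eq_mul_recipQGamma_add_one (hσ : ‖σ‖ ≤ 1) (hε : 0 < ε) (z : ℂ) :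
    recipQGamma σ ε z =
      (1 - σ * exp (-(ε * z))) / (1 - σ * exp (-(ε : ℂ))) * recipQGamma σ ε (z + 1) := by
  have hq := one_sub_mul_exp_neg_ne_zero hσ hε
  have hshift : qPochExp σ ε z = (1 - σ * exp (-(ε * z))) * qPochExp σ ε (z + 1) := by
    rw [qPochExp, qPochInf_eq_one_sub_mul _ (norm_exp_neg_ofReal_lt_one hε), qPochExp,
      mul_assoc σ, ← exp_add, mul_add, mul_one, neg_add]
  rw [recipQGamma, recipQGamma, hshift, add_sub_cancel_right, cpow_sub _ _ hq, cpow_one]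
  field_simp

end QGamma

section Limits

open Complex Topology

variable {ι : Type*} {l : Filter ι} {σ : ℂ} {ε : ι → ℝ} {w : ι → ℂ} {z : ℂ}

lemma tendsto_exp_neg_mul_of_tendsto_zero (hε : Tendsto ε l (𝓝 0)) (hw : Tendsto w l (𝓝 z)) :
    Tendsto (fun i => exp (-(ε i * w i))) l (𝓝 1) := by
  have hε' : Tendsto (fun i => (ε i : ℂ)) l (𝓝 0) := (continuous_ofReal.tendsto 0).comp hε
  simpa using (hε'.mul hw).neg.cexp

lemma tendsto_one_sub_exp_neg_mul_div (hε : Tendsto ε l (𝓝[>] 0)) (hw : Tendsto w l (𝓝 z)) :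
    Tendsto (fun i => (1 - exp (-(ε i * w i))) / ε i) l (𝓝 z) := by
  have hε' : Tendsto (fun i => (ε i : ℂ)) l (𝓝 0) :=
    (continuous_ofReal.tendsto 0).comp (hε.mono_right nhdsWithin_le_nhds)
  have hslope : Tendsto (dslope exp 0) (𝓝 0) (𝓝 1) := by
    simpa [ContinuousAt] using (continuousAt_dslope_same (f := exp) (a := 0)).2
      differentiableAt_exp
  have harg : Tendsto (fun i => -(ε i * w i)) l (𝓝 0) := by simpa using (hε'.mul hw).neg
  refine (mul_one z ▸ hw.mul (hslope.comp harg)).congr' ?_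
  filter_upwards [hε self_mem_nhdsWithin] with i hi
  have hexp := sub_smul_dslope exp 0 (-(ε i * w i))
  rw [sub_zero, exp_zero, smul_eq_mul] at hexp
  have hne : (ε i : ℂ) ≠ 0 := ofReal_ne_zero.2 (ne_of_gt hi)
  rw [← neg_sub, ← hexp, Function.comp_apply]
  field_simp

lemma tendsto_logFactor_one_sub_log (hε : Tendsto ε l (𝓝[>] 0)) (hw : Tendsto w l (𝓝 z))
    (hz : 0 < z.re) :
    Tendsto (fun i => logFactor 1 (ε i) (w i) - Real.log (ε i)) l (𝓝 (log z)) := by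
  have hdiv := tendsto_one_sub_exp_neg_mul_div hε hw
  have hmem : z ∈ slitPlane := Or.inl hz
  refine (hdiv.clog hmem).congr' ?_
  filter_upwards [hε self_mem_nhdsWithin, hdiv.eventually_ne (slitPlane_ne_zero hmem)] with i hi hne
  rw [logFactor, one_mul, eq_sub_iff_add_eq', ← log_ofReal_mul hi hne,
    mul_div_cancel₀ _ (ofReal_ne_zero.2 (ne_of_gt hi))]

lemma one_sub_mem_slitPlane (hσ : ‖σ‖ ≤ 1) (hσ1 : σ ≠ 1) : 1 - σ ∈ slitPlane := by
  rcases lt_or_ge σ.re 1 with hre | hre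
  · exact Or.inl (by rwa [sub_re, one_re, sub_pos])
  · refine Or.inr fun him => hσ1 (ext (le_antisymm ((re_le_norm σ).trans hσ) hre) ?_)
    simpa using him

lemma tendsto_logFactor (hσ : ‖σ‖ ≤ 1) (hσ1 : σ ≠ 1) (hε : Tendsto ε l (𝓝 0))
    (hw : Tendsto w l (𝓝 z)) :
    Tendsto (fun i => logFactor σ (ε i) (w i)) l (𝓝 (log (1 - σ))) := by
  have hfactor := ((tendsto_exp_neg_mul_of_tendsto_zero hε hw).const_mul σ).const_sub 1
  rw [mul_one] at hfactor
  exact hfactor.clog (one_sub_mem_slitPlane hσ hσ1)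

lemma tendsto_recipQGamma_of_tendsto_logFactor (hσ : ‖σ‖ ≤ 1) (hε : Tendsto ε l (𝓝[>] 0))
    {c : ι → ℂ} {f : ℂ → ℂ} (hf : ∀ x : ℂ, 0 < x.re → ∀ y : ι → ℂ, Tendsto y l (𝓝 x) →
      Tendsto (fun i => logFactor σ (ε i) (y i) - c i) l (𝓝 (f x)))
    (hw : Tendsto w l (𝓝 z)) (hz : 1 < z.re) :
    Tendsto (fun i => recipQGamma σ (ε i) (w i)) l (𝓝 (exp (∑' k, eulerTerm f z k))) := by
  have hre : ∀ᶠ i in l, 1 < (w i).re :=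
    ((continuous_re.tendsto z).comp hw).eventually (eventually_gt_nhds hz)
  have hnorm : ∀ᶠ i in l, ‖w i - 1‖ < ‖z - 1‖ + 1 :=
    (hw.sub_const 1).norm.eventually (eventually_lt_nhds (lt_add_one _))
  have hbound : ∀ᶠ i in l, ∀ k, ‖eulerTerm (logFactor σ (ε i)) (w i) k‖ ≤
      ((‖z - 1‖ + 1) ^ 2 + (‖z - 1‖ + 1)) * (1 / ((k : ℝ) + 1) ^ 2) := by
    filter_upwards [hε self_mem_nhdsWithin, hre, hnorm] with i hi hre hnorm k
    exact (norm_eulerTerm_logFactor_le hσ hi hre.le k).trans (by gcongr)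
  refine (tendsto_tsum_of_dominated_convergence
    (summable_one_div_natCast_add_one_sq.mul_left _)
    (tendsto_eulerTerm hf hw (one_pos.trans hz)) hbound).cexp.congr' ?_
  filter_upwards [hε self_mem_nhdsWithin, hre] with i hi hre
  exact (recipQGamma_eq_exp_tsum hσ hi (one_pos.trans hre)).symm

lemma tendsto_recipQGamma_of_one_lt_re (hσ : ‖σ‖ ≤ 1) (hε : Tendsto ε l (𝓝[>] 0)) {g r : ℂ → ℂ}
    (hg : ∀ z, g z = r z * g (z + 1))
    (hr : ∀ z (w : ι → ℂ), Tendsto w l (𝓝 z) → Tendsto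
      (fun i => (1 - σ * exp (-(ε i * w i))) / (1 - σ * exp (-(ε i : ℂ)))) l (𝓝 (r z)))
    (hbase : ∀ z (w : ι → ℂ), 1 < z.re → Tendsto w l (𝓝 z) →
      Tendsto (fun i => recipQGamma σ (ε i) (w i)) l (𝓝 (g z)))
    (hw : Tendsto w l (𝓝 z)) : Tendsto (fun i => recipQGamma σ (ε i) (w i)) l (𝓝 (g z)) := by
  obtain ⟨m, hm⟩ := exists_nat_gt (1 - z.re)
  induction m generalizing z w with
  | zero => exact hbase z w (by simpa using hm) hw
  | succ m ih =>
    have hshift := ih (hw.add_const 1) (by push_cast at hm; rw [add_re, one_re]; linarith)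
    rw [hg]
    refine ((hr z w hw).mul hshift).congr' ?_
    filter_upwards [hε self_mem_nhdsWithin] with i hi
    exact (recipQGamma_eq_mul_recipQGamma_add_one hσ hi (w i)).symm

theorem tendsto_recipQGamma_one (hε : Tendsto ε l (𝓝[>] 0)) (hw : Tendsto w l (𝓝 z)) :
    Tendsto (fun i => recipQGamma 1 (ε i) (w i)) l (𝓝 (Gamma z)⁻¹) := by
  refine tendsto_recipQGamma_of_one_lt_re (g := fun z => (Gamma z)⁻¹) (r := id) norm_one.le hε
    (fun z => ?_) (fun z w hw => ?_) (fun z w hz hw => ?_) hw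
  · simpa only [id_eq, one_div] using
      one_div_Gamma_eq_self_mul_one_div_Gamma_add_one z
  · have hquot := (tendsto_one_sub_exp_neg_mul_div hε hw).div
      (tendsto_one_sub_exp_neg_mul_div hε (tendsto_const_nhds (x := 1))) one_ne_zero
    rw [div_one] at hquot
    refine hquot.congr' ?_
    filter_upwards [hε self_mem_nhdsWithin] with i hi
    rw [Pi.div_apply, div_div_div_cancel_right₀ (ofReal_ne_zero.2 (ne_of_gt hi)), one_mul, one_mul,
      mul_one]
  · rw [← exp_tsum_eulerTerm_log hz.le]
    exact tendsto_recipQGamma_of_tendsto_logFactor norm_one.le hε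
      (fun x hx y hy => tendsto_logFactor_one_sub_log hε hy hx) hw hz

theorem tendsto_recipQGamma_of_ne_one (hσ : ‖σ‖ ≤ 1) (hσ1 : σ ≠ 1) (hε : Tendsto ε l (𝓝[>] 0))
    (hw : Tendsto w l (𝓝 z)) : Tendsto (fun i => recipQGamma σ (ε i) (w i)) l (𝓝 1) := by
  have hε0 : Tendsto ε l (𝓝 0) := hε.mono_right nhdsWithin_le_nhds
  refine tendsto_recipQGamma_of_one_lt_re (g := 1) (r := 1) hσ hε (fun z => (one_mul _).symm)
    (fun z w hw => ?_) (fun z w hz hw => ?_) hw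
  · have hlim : ∀ {z : ℂ} {w : ι → ℂ}, Tendsto w l (𝓝 z) →
        Tendsto (fun i => 1 - σ * exp (-(ε i * w i))) l (𝓝 (1 - σ)) := fun hw => by
      simpa only [mul_one] using
        ((tendsto_exp_neg_mul_of_tendsto_zero hε0 hw).const_mul σ).const_sub 1
    simpa [Pi.div_def, sub_ne_zero.2 hσ1.symm] using
      (hlim hw).div (hlim (tendsto_const_nhds (x := 1))) (sub_ne_zero.2 hσ1.symm)
  · simpa [eulerTerm] using tendsto_recipQGamma_of_tendsto_logFactor hσ hε (c := 0)
      (f := fun _ => log (1 - σ))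
      (fun x _ y hy => by simpa using tendsto_logFactor hσ hσ1 hε0 hy) hw hz

end Limits

section AskeyWilsonWeight

open Complex Topology

/-- The Askey–Wilson weight in the angle `θ`, with parameters `A, B, C, D` and without the factor
`1 / (2π)`: as a density in `cos θ` it still has to be divided by `2π sin θ`. -/
noncomputable def askeyWilsonWeight (A B C D q : ℂ) (θ : ℝ) : ℂ :=
  (qPochInf q q * qPochInf (A * D) q * qPochInf (A * B) q * qPochInf (A * C) q *
    qPochInf (B * D) q * qPochInf (C * D) q * qPochInf (B * C) q *
    qPochInf (eI (2 * θ)) q * qPochInf (eI (-2 * θ)) q) /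
  (qPochInf (A * B * C * D) q *
    ((qPochInf (A * eI θ) q * qPochInf (D * eI θ) q *
      qPochInf (B * eI θ) q * qPochInf (C * eI θ) q) *
     (qPochInf (A * eI (-θ)) q * qPochInf (D * eI (-θ)) q *
      qPochInf (B * eI (-θ)) q * qPochInf (C * eI (-θ)) q)))

/-- The continuous dual Hahn weight in the variable `x ^ 2`, up to a constant and the Jacobian
factor `1 / x`. At a pole of `Γ` the convention `Gamma z = 0` gives `(Gamma z)⁻¹ = 0`, which is
the value of the entire function `1 / Γ` there. -/
noncomputable def continuousDualHahnWeight (a b c x : ℝ) : ℂ :=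
  GammaSq a x * GammaSq b x * GammaSq c x *
    ((Gamma (a + b))⁻¹ * (Gamma (a + c))⁻¹ * (Gamma (b + c))⁻¹) / GammaSq 0 (2 * x)

/-- `(σ q ^ (a + y), σ q ^ (a - y); q)_∞`, which is a squared modulus for real `σ`, `a` and
`y ∈ iℝ`. -/
noncomputable def qPochExpPair (σ : ℂ) (ε : ℝ) (a y : ℂ) : ℂ :=
  qPochExp σ ε (a + y) * qPochExp σ ε (a - y)

/-- The counterpart of `qPochExpPair` for `recipQGamma`; for `y = ix` it is the `q`-analogue of
`(GammaSq a x)⁻¹`. -/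
noncomputable def recipQGammaPair (σ : ℂ) (ε : ℝ) (a y : ℂ) : ℂ :=
  recipQGamma σ ε (a + y) * recipQGamma σ ε (a - y)

lemma askeyWilsonWeight_exp (σ : ℂ) (ε a b c d x : ℝ) :
    askeyWilsonWeight (exp (-(ε * a))) (exp (-(ε * b))) (exp (-(ε * c))) (σ * exp (-(ε * d)))
      (exp (-(ε : ℂ))) (ε * x) =
    qPochExp 1 ε 1 * (qPochExp 1 ε (a + b) * qPochExp 1 ε (a + c) * qPochExp 1 ε (b + c)) *
        qPochExpPair 1 ε 0 (2 * (x * I)) /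
      (qPochExpPair 1 ε a (x * I) * qPochExpPair 1 ε b (x * I) * qPochExpPair 1 ε c (x * I)) *
      (qPochExp σ ε (a + d) * qPochExp σ ε (b + d) * qPochExp σ ε (c + d) /
        (qPochExp σ ε (a + b + c + d) * qPochExpPair σ ε d (x * I))) := by
  have hmul (y z : ℂ) : exp (-(ε * y)) * exp (-(ε * z)) = exp (-(ε * (y + z))) := by
    rw [← exp_add, mul_add, neg_add]
  have hmul_left (y z : ℂ) :
      exp (-(ε * y)) * (σ * exp (-(ε * z))) = σ * exp (-(ε * (y + z))) := by
    rw [mul_left_comm, hmul]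
  have hmul_right (y z : ℂ) :
      σ * exp (-(ε * y)) * exp (-(ε * z)) = σ * exp (-(ε * (y + z))) := by
    rw [mul_assoc, hmul]
  have hpos : eI (ε * x) = exp (-(ε * -(x * I))) := by rw [eI]; push_cast; ring_nf
  have hneg : eI (-(ε * x)) = exp (-(ε * (x * I))) := by rw [eI]; push_cast; ring_nf
  have hpos2 : eI (2 * (ε * x)) = exp (-(ε * -(2 * (x * I)))) := by rw [eI]; push_cast; ring_nf
  have hneg2 : eI (-2 * (ε * x)) = exp (-(ε * (2 * (x * I)))) := by rw [eI]; push_cast; ring_nf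
  simp only [askeyWilsonWeight, qPochExpPair, qPochExp, hpos, hneg, hpos2, hneg2, hmul, hmul_left,
    hmul_right, one_mul, mul_one, zero_add, zero_sub, ← sub_eq_add_neg]
  rw [div_mul_div_comm]
  ring

section Quotients

variable {σ : ℂ} {ε : ℝ}

lemma qPochExpPair_eq (hσ : ‖σ‖ ≤ 1) (hε : 0 < ε) (a y : ℂ) :
    qPochExpPair σ ε a y = recipQGammaPair σ ε a y *
      (qPochExp σ ε 1 ^ 2 * (1 - σ * exp (-(ε : ℂ))) ^ (2 - 2 * a)) := by
  rw [qPochExpPair, recipQGammaPair, qPochExp_eq_recipQGamma_mul hσ hε (a + y),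
    qPochExp_eq_recipQGamma_mul hσ hε (a - y),
    show 2 - 2 * a = (1 - (a + y)) + (1 - (a - y)) by ring,
    cpow_add _ _ (one_sub_mul_exp_neg_ne_zero hσ hε)]
  ring

lemma qPochExp_mul_mul_eq (hσ : ‖σ‖ ≤ 1) (hε : 0 < ε) (a b c : ℂ) :
    qPochExp σ ε a * qPochExp σ ε b * qPochExp σ ε c =
      recipQGamma σ ε a * recipQGamma σ ε b * recipQGamma σ ε c *
        (qPochExp σ ε 1 ^ 3 * (1 - σ * exp (-(ε : ℂ))) ^ (3 - (a + b + c))) := by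
  have hq := one_sub_mul_exp_neg_ne_zero hσ hε
  rw [qPochExp_eq_recipQGamma_mul hσ hε a, qPochExp_eq_recipQGamma_mul hσ hε b,
    qPochExp_eq_recipQGamma_mul hσ hε c,
    show 3 - (a + b + c) = (1 - a) + (1 - b) + (1 - c) by ring, cpow_add _ _ hq, cpow_add _ _ hq]
  ring

lemma one_sub_exp_mul_qPochExp_quotient (hε : 0 < ε) (a b c y : ℂ) :
    (1 - exp (-(ε : ℂ))) *
      (qPochExp 1 ε 1 * (qPochExp 1 ε (a + b) * qPochExp 1 ε (a + c) * qPochExp 1 ε (b + c)) *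
        qPochExpPair 1 ε 0 (2 * y) /
      (qPochExpPair 1 ε a y * qPochExpPair 1 ε b y * qPochExpPair 1 ε c y)) =
    recipQGamma 1 ε (a + b) * recipQGamma 1 ε (a + c) * recipQGamma 1 ε (b + c) *
        recipQGammaPair 1 ε 0 (2 * y) /
      (recipQGammaPair 1 ε a y * recipQGammaPair 1 ε b y * recipQGammaPair 1 ε c y) := by
  have hσ : ‖(1 : ℂ)‖ ≤ 1 := norm_one.le
  have hq := one_sub_mul_exp_neg_ne_zero hσ hε
  rw [← one_mul (exp (-(ε : ℂ)))]
  simp only [qPochExp_mul_mul_eq hσ hε, qPochExpPair_eq hσ hε]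
  generalize 1 - 1 * exp (-(ε : ℂ)) = Q at hq ⊢
  have hpow : Q * Q ^ (3 - (a + b + (a + c) + (b + c))) * Q ^ (2 - 2 * 0 : ℂ) =
      Q ^ (2 - 2 * a) * Q ^ (2 - 2 * b) * Q ^ (2 - 2 * c) := by
    nth_rw 1 [← cpow_one Q]
    simp only [← cpow_add _ _ hq]
    congr 1
    ring
  have hne : qPochExp 1 ε 1 ^ 6 * (Q ^ (2 - 2 * a) * Q ^ (2 - 2 * b) * Q ^ (2 - 2 * c)) ≠ 0 := by
    simp [cpow_eq_zero_iff, hq, qPochExp_one_ne_zero hσ hε]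
  symm
  rw [← mul_div_mul_right _ _ hne, ← mul_div_assoc]
  congr 1
  · rw [← hpow]; ring
  · ring

lemma qPochExp_quotient_eq_recipQGamma_quotient (hσ : ‖σ‖ ≤ 1) (hε : 0 < ε) (a b c d y : ℂ) :
    qPochExp σ ε (a + d) * qPochExp σ ε (b + d) * qPochExp σ ε (c + d) /
        (qPochExp σ ε (a + b + c + d) * qPochExpPair σ ε d y) =
    recipQGamma σ ε (a + d) * recipQGamma σ ε (b + d) * recipQGamma σ ε (c + d) /
        (recipQGamma σ ε (a + b + c + d) * recipQGammaPair σ ε d y) := by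
  have hq := one_sub_mul_exp_neg_ne_zero hσ hε
  rw [qPochExp_mul_mul_eq hσ hε, qPochExpPair_eq hσ hε, qPochExp_eq_recipQGamma_mul hσ hε (_ + d)]
  generalize 1 - σ * exp (-(ε : ℂ)) = Q at hq ⊢
  have hpow : Q ^ (3 - (a + d + (b + d) + (c + d))) =
      Q ^ (1 - (a + b + c + d)) * Q ^ (2 - 2 * d) := by
    rw [← cpow_add _ _ hq]
    congr 1
    ring
  have hne : qPochExp σ ε 1 ^ 3 * Q ^ (3 - (a + d + (b + d) + (c + d))) ≠ 0 := by
    simp [cpow_eq_zero_iff, hq, qPochExp_one_ne_zero hσ hε]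
  symm
  rw [← mul_div_mul_right _ _ hne]
  congr 1
  rw [hpow]
  ring

end Quotients

section WeightLimit

variable {ι : Type*} {l : Filter ι} {σ : ℂ} {ε x : ι → ℝ} {x₀ : ℝ} {y : ι → ℂ}

lemma tendsto_recipQGammaPair_one (hε : Tendsto ε l (𝓝[>] 0)) (hy : Tendsto y l (𝓝 (x₀ * I)))
    (a : ℝ) : Tendsto (fun i => recipQGammaPair 1 (ε i) a (y i)) l (𝓝 (GammaSq a x₀)⁻¹) := by
  rw [GammaSq, mul_inv]
  exact (tendsto_recipQGamma_one hε (hy.const_add _)).mul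
    (tendsto_recipQGamma_one hε (hy.const_sub _))

lemma tendsto_recipQGammaPair_of_ne_one {y₀ : ℂ} (hσ : ‖σ‖ ≤ 1) (hσ1 : σ ≠ 1)
    (hε : Tendsto ε l (𝓝[>] 0)) (hy : Tendsto y l (𝓝 y₀)) (a : ℂ) :
    Tendsto (fun i => recipQGammaPair σ (ε i) a (y i)) l (𝓝 1) :=
  mul_one (1 : ℂ) ▸ (tendsto_recipQGamma_of_ne_one hσ hσ1 hε (hy.const_add _)).mul
    (tendsto_recipQGamma_of_ne_one hσ hσ1 hε (hy.const_sub _))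

lemma GammaSq_ne_zero (a : ℝ) {b : ℝ} (hb : b ≠ 0) : GammaSq a b ≠ 0 := by
  refine mul_ne_zero (Gamma_ne_zero fun m h => hb ?_) (Gamma_ne_zero fun m h => hb ?_) <;>
    simpa using congrArg im h

theorem tendsto_one_sub_exp_mul_askeyWilsonWeight (hσ : ‖σ‖ ≤ 1) (hσ1 : σ ≠ 1)
    (hε : Tendsto ε l (𝓝[>] 0)) (hx : Tendsto x l (𝓝 x₀)) (hx₀ : x₀ ≠ 0) (a b c d : ℝ) :
    Tendsto (fun i => (1 - exp (-(ε i : ℂ))) *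
      askeyWilsonWeight (exp (-(ε i * a))) (exp (-(ε i * b))) (exp (-(ε i * c)))
        (σ * exp (-(ε i * d))) (exp (-(ε i : ℂ))) (ε i * x i)) l
      (𝓝 (continuousDualHahnWeight a b c x₀)) := by
  have hxI : Tendsto (fun i => (x i : ℂ) * I) l (𝓝 (x₀ * I)) :=
    ((continuous_ofReal.tendsto x₀).comp hx).mul_const I
  have h2xI : Tendsto (fun i => 2 * ((x i : ℂ) * I)) l (𝓝 ((2 * x₀ : ℝ) * I)) := by
    simpa only [ofReal_mul, ofReal_ofNat, mul_assoc] using hxI.const_mul 2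
  have hone (z : ℂ) := tendsto_recipQGamma_one hε (tendsto_const_nhds (x := z))
  have hsigma (z : ℂ) := tendsto_recipQGamma_of_ne_one hσ hσ1 hε (tendsto_const_nhds (x := z))
  have hpair := tendsto_recipQGammaPair_one hε hxI
  have hnum := (((hone (a + b)).mul (hone (a + c))).mul (hone (b + c))).mul
    (tendsto_recipQGammaPair_one hε h2xI 0)
  have hden := ((hpair a).mul (hpair b)).mul (hpair c)
  have hden₀ : (GammaSq a x₀)⁻¹ * (GammaSq b x₀)⁻¹ * (GammaSq c x₀)⁻¹ ≠ 0 :=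
    mul_ne_zero (mul_ne_zero (inv_ne_zero (GammaSq_ne_zero a hx₀))
      (inv_ne_zero (GammaSq_ne_zero b hx₀))) (inv_ne_zero (GammaSq_ne_zero c hx₀))
  have hsigmaPart := (((hsigma (a + d)).mul (hsigma (b + d))).mul (hsigma (c + d))).div
    ((hsigma (a + b + c + d)).mul (tendsto_recipQGammaPair_of_ne_one hσ hσ1 hε hxI d))
    (by simp)
  convert ((hnum.div hden hden₀).mul hsigmaPart).congr' ?_ using 2
  · rw [continuousDualHahnWeight]
    simp only [mul_inv, inv_inv, div_eq_mul_inv, mul_one, inv_one]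
    ring
  · filter_upwards [hε self_mem_nhdsWithin] with i hi
    rw [askeyWilsonWeight_exp, ← mul_assoc, one_sub_exp_mul_qPochExp_quotient hi,
      qPochExp_quotient_eq_recipQGamma_quotient hσ hi]
    simp only [Pi.div_apply, ofReal_zero]

end WeightLimit

end AskeyWilsonWeight

section WeakAsymmetry

open Complex Topology

variable {ρ : ℝ}

lemma tendsto_two_div_sqrt_nhdsGT : Tendsto (fun N : ℕ => 2 / √(N : ℝ)) atTop (𝓝[>] 0) := by
  have hsqrt : Tendsto (fun N : ℕ => √(N : ℝ)) atTop atTop :=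
    Real.tendsto_sqrt_atTop.comp tendsto_natCast_atTop_atTop
  refine tendsto_nhdsWithin_iff.2 ⟨hsqrt.const_div_atTop 2, ?_⟩
  filter_upwards [eventually_gt_atTop 0] with N hN
  exact div_pos two_pos (Real.sqrt_pos.2 (Nat.cast_pos.2 hN))

lemma qN_eq_exp (N : ℕ) : (qN N : ℂ) = exp (-((2 / √(N : ℝ) : ℝ) : ℂ)) := by
  rw [qN, ofReal_exp, neg_div, ofReal_neg]

lemma qpow_eq_exp (N : ℕ) (x : ℝ) : qpow N x = exp (-((2 / √(N : ℝ) : ℝ) * x)) := by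
  rw [qpow, ofReal_exp]
  push_cast
  ring_nf

lemma qpow_mul_qpow (N : ℕ) (x y : ℝ) : qpow N x * qpow N y = qpow N (x + y) := by
  simp only [qpow, ← ofReal_mul, ← Real.exp_add]
  ring_nf

lemma arccos_one_sub_two_mul_sq {y : ℝ} (hy₀ : 0 ≤ y) (hy₁ : y ≤ 1) :
    Real.arccos (1 - 2 * y ^ 2) = 2 * Real.arcsin y := by
  have hcos : 1 - 2 * y ^ 2 = Real.cos (2 * Real.arcsin y) := by
    rw [Real.cos_two_mul, Real.cos_sq', Real.sin_arcsin (by linarith) hy₁]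
    ring
  rw [hcos, Real.arccos_cos (by have := Real.arcsin_nonneg.2 hy₀; positivity)
    (by linarith [Real.arcsin_le_pi_div_two y])]

lemma tendsto_arccos_one_sub_two_mul_sq_div :
    Tendsto (fun y : ℝ => Real.arccos (1 - 2 * y ^ 2) / y) (𝓝[>] 0) (𝓝 2) := by
  have hderiv : HasDerivAt Real.arcsin 1 0 := by
    simpa using Real.hasDerivAt_arcsin (x := 0) (by simp) (by simp)
  have hslope := (hderiv.tendsto_slope_zero_right).const_mul 2
  rw [mul_one] at hslope
  refine hslope.congr' ?_
  filter_upwards [Ioc_mem_nhdsGT one_pos] with y hy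
  rw [arccos_one_sub_two_mul_sq hy.1.le hy.2, zero_add, Real.arcsin_zero, sub_zero, smul_eq_mul]
  ring

lemma tendsto_arccos_one_sub_div_scale (hρ : 0 < ρ) :
    Tendsto (fun N : ℕ => Real.arccos (1 - ρ / (2 * (N : ℝ))) / (2 / √(N : ℝ))) atTop
      (𝓝 (√ρ / 2)) := by
  have hc : 0 < √ρ / 4 := div_pos (Real.sqrt_pos.2 hρ) four_pos
  have harg : Tendsto (fun N : ℕ => √ρ / 4 * (2 / √(N : ℝ))) atTop (𝓝[>] 0) := by
    refine tendsto_nhdsWithin_iff.2 ⟨?_, ?_⟩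
    · simpa using (tendsto_two_div_sqrt_nhdsGT.mono_right nhdsWithin_le_nhds).const_mul (√ρ / 4)
    · filter_upwards [tendsto_two_div_sqrt_nhdsGT self_mem_nhdsWithin] with N hN
      exact mul_pos hc hN
  have hlim := (tendsto_arccos_one_sub_two_mul_sq_div.comp harg).mul_const (√ρ / 4)
  rw [show 2 * (√ρ / 4) = √ρ / 2 by ring] at hlim
  refine hlim.congr fun N => ?_
  have hsq : 2 * (√ρ / 4 * (2 / √(N : ℝ))) ^ 2 = ρ / (2 * N) := by
    rw [mul_pow, div_pow, div_pow, Real.sq_sqrt hρ.le, Real.sq_sqrt N.cast_nonneg]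
    ring
  rw [Function.comp_apply, hsq]
  field_simp

lemma four_pi_mul_mul_sqrt_div (hρ : 0 ≤ ρ) (N : ℕ) :
    4 * Real.pi * N * √(ρ / N) = 8 * Real.pi * √ρ / (2 / √(N : ℝ)) := by
  rw [Real.sqrt_div hρ, div_div_eq_mul_div, ← mul_div_assoc, mul_div_right_comm,
    mul_div_assoc _ (N : ℝ), Real.div_sqrt]
  ring

lemma tendsto_one_sub_exp_mul_prefactor (hρ : 0 ≤ ρ) :
    Tendsto (fun N : ℕ => (1 - exp (-((2 / √(N : ℝ) : ℝ) : ℂ))) *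
      (ofReal (4 * Real.pi * N) * ofReal √(ρ / N) * ofReal √(1 - ρ / (4 * N)))) atTop
      (𝓝 (ofReal (8 * Real.pi * √ρ))) := by
  have hsqrt : Tendsto (fun N : ℕ => √(1 - ρ / (4 * (N : ℝ)))) atTop (𝓝 1) := by
    have hfour : Tendsto (fun N : ℕ => 4 * (N : ℝ)) atTop atTop :=
      tendsto_natCast_atTop_atTop.const_mul_atTop four_pos
    simpa using ((hfour.const_div_atTop ρ).const_sub 1).sqrt
  have hexp := tendsto_one_sub_exp_neg_mul_div tendsto_two_div_sqrt_nhdsGT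
    (tendsto_const_nhds (x := (1 : ℂ)))
  have hlim := (hexp.mul_const (ofReal (8 * Real.pi * √ρ))).mul
    ((continuous_ofReal.tendsto 1).comp hsqrt)
  rw [one_mul, ofReal_one, mul_one] at hlim
  refine hlim.congr fun N => ?_
  rw [← ofReal_mul (4 * Real.pi * N), four_pi_mul_mul_sqrt_div hρ, ofReal_div (_ * _),
    mul_one, Function.comp_apply]
  ring

lemma askeyWilsonWeight_qpow (N : ℕ) (a b c d : ℝ) (q : ℂ) (θ : ℝ) :
    askeyWilsonWeight (qpow N a) (qpow N b) (qpow N c) (-qpow N d) q θ =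
    (qPochInf q q * qPochInf (-qpow N (a + d)) q * qPochInf (qpow N (a + b)) q *
      qPochInf (qpow N (a + c)) q * qPochInf (-qpow N (b + d)) q *
      qPochInf (-qpow N (c + d)) q * qPochInf (qpow N (b + c)) q *
      qPochInf (eI (2 * θ)) q * qPochInf (eI (-2 * θ)) q) /
    (qPochInf (-qpow N (a + b + c + d)) q *
      ((qPochInf (qpow N a * eI θ) q * qPochInf (-qpow N d * eI θ) q *
        qPochInf (qpow N b * eI θ) q * qPochInf (qpow N c * eI θ) q) *
       (qPochInf (qpow N a * eI (-θ)) q * qPochInf (-qpow N d * eI (-θ)) q *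
        qPochInf (qpow N b * eI (-θ)) q * qPochInf (qpow N c * eI (-θ)) q))) := by
  simp only [askeyWilsonWeight, mul_neg, qpow_mul_qpow]

theorem statement9_general (a b c d : ℝ) (hρ : 0 < ρ) :
    Tendsto (fun N : ℕ =>
      askeyWilsonWeight (qpow N a) (qpow N b) (qpow N c) (-qpow N d) (qN N)
          (Real.arccos (1 - ρ / (2 * (N : ℝ)))) /
        (ofReal (4 * Real.pi * N) * ofReal √(ρ / N) * ofReal √(1 - ρ / (4 * N)))) atTop
      (𝓝 (continuousDualHahnWeight a b c (√ρ / 2) / ofReal (8 * Real.pi * √ρ))) := by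
  have hsqrt : √ρ ≠ 0 := (Real.sqrt_pos.2 hρ).ne'
  have hweight := tendsto_one_sub_exp_mul_askeyWilsonWeight (σ := -1) (by simp) (by norm_num)
    tendsto_two_div_sqrt_nhdsGT (tendsto_arccos_one_sub_div_scale hρ)
    (div_ne_zero hsqrt two_ne_zero) a b c d
  refine (hweight.div (tendsto_one_sub_exp_mul_prefactor hρ.le)
    (ofReal_ne_zero.2 (by positivity))).congr' ?_
  filter_upwards [tendsto_two_div_sqrt_nhdsGT self_mem_nhdsWithin] with N hN
  have hq := one_sub_mul_exp_neg_ne_zero norm_one.le hN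
  rw [one_mul] at hq
  rw [Pi.div_apply, mul_div_mul_left _ _ hq, mul_div_cancel₀ _ (ne_of_gt hN), neg_one_mul,
    ← qN_eq_exp]
  simp only [← qpow_eq_exp]

end WeakAsymmetry

theorem statement9 (u v w s t ρ : ℝ) (j : ℕ) (huv : 0 < u + v) (hw : 0 < w) (hst : s < t)
    (hu : u - t / 2 < 0) (hρ : 0 < ρ) (hj : (j : ℝ) ≤ -u + t / 2) :
    Tendsto (fun N : ℕ =>
      (qPochInf (Complex.ofReal (qN N)) (qN N) * qPochInf (-(qpow N (v + w + s))) (qN N) *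
       qPochInf (qpow N (j + v + u)) (qN N) * qPochInf (qpow N (v - j - u + t)) (qN N) *
       qPochInf (-(qpow N (w + j + u))) (qN N) * qPochInf (-(qpow N (w - j - u + t))) (qN N) *
       qPochInf (qpow N (t - s)) (qN N) *
       qPochInf (eI (2 * Real.arccos (1 - ρ / (2 * (N : ℝ))))) (qN N) *
       qPochInf (eI (-2 * Real.arccos (1 - ρ / (2 * (N : ℝ))))) (qN N)) /
      (Complex.ofReal (4 * Real.pi * (N : ℝ)) * Complex.ofReal (Real.sqrt (ρ / (N : ℝ))) *
       Complex.ofReal (Real.sqrt (1 - ρ / (4 * (N : ℝ)))) *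
       qPochInf (-(qpow N (v + w + t))) (qN N) *
       ((qPochInf (qpow N (v + s / 2) * eI (Real.arccos (1 - ρ / (2 * (N : ℝ))))) (qN N) *
         qPochInf (-(qpow N (w + s / 2)) * eI (Real.arccos (1 - ρ / (2 * (N : ℝ))))) (qN N) *
         qPochInf (qpow N (j + u - s / 2) * eI (Real.arccos (1 - ρ / (2 * (N : ℝ))))) (qN N) *
         qPochInf (qpow N (t - s / 2 - j - u) * eI (Real.arccos (1 - ρ / (2 * (N : ℝ))))) (qN N)) *
        (qPochInf (qpow N (v + s / 2) * eI (-(Real.arccos (1 - ρ / (2 * (N : ℝ)))))) (qN N) *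
         qPochInf (-(qpow N (w + s / 2)) * eI (-(Real.arccos (1 - ρ / (2 * (N : ℝ)))))) (qN N) *
         qPochInf (qpow N (j + u - s / 2) * eI (-(Real.arccos (1 - ρ / (2 * (N : ℝ)))))) (qN N) *
         qPochInf (qpow N (t - s / 2 - j - u) * eI (-(Real.arccos (1 - ρ / (2 * (N : ℝ)))))) (qN N)))))
      atTop
      (nhds (GammaSq (v + s / 2) (Real.sqrt ρ / 2) * GammaSq ((j : ℝ) + u - s / 2) (Real.sqrt ρ / 2) *
        GammaSq (t - s / 2 - j - u) (Real.sqrt ρ / 2) /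
        (Complex.ofReal (8 * Real.pi * Real.sqrt ρ) * Complex.Gamma ((j + v + u : ℝ) : ℂ) *
         Complex.Gamma ((v - j - u + t : ℝ) : ℂ) * Complex.Gamma ((t - s : ℝ) : ℂ) *
         GammaSq 0 (Real.sqrt ρ)))) := by
  convert statement9_general (v + s / 2) (j + u - s / 2) (t - s / 2 - j - u) (w + s / 2) hρ using 2
  · rw [askeyWilsonWeight_qpow]
    ring_nf
  · rw [continuousDualHahnWeight]
    push_cast
    ring_nf
end

section
/- For every b ∈ (0,1), every ε ∈ (0,1/2) and every r₀ > 0 there exist constants C > 0 and κ₀ > 0 such that for all κ ∈ (0, κ₀) and all real z > r₀: | log( (e^{−κz}; e^{−κ})_∞ ) + π²/(6κ) + (z − 1/2)·log κ + log( Γ(z)/√(2π) ) | ≤ C·( κ(1+z)² + κ^b (1+z)^{1+2b+ε} ). -/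
open Filter

/-- Infinite q-Pochhammer symbol `(a;q)_∞ = ∏_{k=0}^∞ (1 - a q^k)` for real `a, q`. -/
noncomputable def qPochInfR (a q : ℝ) : ℝ := ∏' k : ℕ, (1 - a * q ^ k)

/-!
Write `R κ z` for the quantity to be bounded (`qPochRemainder` below). As a function of `z` it is
convex: combining the product for `(q ^ z; q)_∞` with Gauss's product for `Γ`, it is a limit of sums
of affine functions and translates of the convex function `x ↦ log ((1 - exp (-x)) / x)`, taken at
`κ z`. Moreover `R κ (z + 1) - R κ z = -log ((1 - exp (-κ z)) / (κ z))` lies between `0` and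
`κ z / 2`. As in the Bohr–Mollerup theorem, convexity together with these unit steps controls
`R κ z - R κ 1` for every `z > 0`.

The value `R κ 1` comes from the modular transformation of the Dedekind eta function, which gives
`R κ 1 = κ / 24 + log (p; p)_∞` with `p = exp (-4π² / κ)`. Expanding the logarithms and summing the
resulting double series over the factors first shows `-log (p; p)_∞ ≤ ζ(2) κ / (4π²) = κ / 24`, so
that `0 ≤ R κ 1 ≤ κ / 24`.
-/

section

open Real Set Topology

section Convexity

lemma convexOn_of_tendsto {E ι : Type*} [AddCommGroup E] [Module ℝ E] {l : Filter ι} [l.NeBot]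
    {s : Set E} {F : ι → E → ℝ} {f : E → ℝ} (hs : Convex ℝ s) (hF : ∀ i, ConvexOn ℝ s (F i))
    (hf : ∀ x ∈ s, Tendsto (F · x) l (𝓝 (f x))) : ConvexOn ℝ s f :=
  ⟨hs, fun _x hx _y hy _a _b ha hb hab ↦ le_of_tendsto_of_tendsto' (hf _ (hs hx hy ha hb hab))
    (((hf _ hx).const_smul _).add ((hf _ hy).const_smul _))
    fun i ↦ (hF i).2 hx hy ha hb hab⟩

variable {f : ℝ → ℝ} {c : ℝ}

lemma sub_le_of_convexOn_of_add_one_le (hf : ConvexOn ℝ (Ioi 0) f)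
    (h12 : f 1 ≤ f 2) (hstep : ∀ x, 0 < x → f (x + 1) ≤ f x + c * x)
    {x : ℝ} (hx : 0 < x) : f 1 - c * (2 * x + 1) ≤ f x := by
  have h2 : f 2 ≤ f (x + 1 + 1) :=
    hf.le_right_of_left_le'' (mem_Ioi.2 one_pos) (mem_Ioi.2 (by positivity)) one_lt_two
      (by linarith) h12
  linarith [hstep x hx, hstep (x + 1) (by positivity)]

lemma le_add_of_convexOn_of_add_one_le (hf : ConvexOn ℝ (Ioi 0) f)
    (hmono : ∀ x, 0 < x → f x ≤ f (x + 1)) (hstep : ∀ x, 0 < x → f (x + 1) ≤ f x + c * x)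
    {x : ℝ} (hx : 0 < x) : f x ≤ f 1 + c * x * (x + 1) := by
  have hslope : (f (x + 1) - f 1) / x ≤ f (x + 1 + 1) - f (x + 1) := by
    simpa using hf.slope_mono_adjacent (mem_Ioi.2 one_pos) (mem_Ioi.2 (by positivity))
      (show 1 < x + 1 by linarith) (lt_add_one (x + 1))
  have hchord : f (x + 1) - f 1 ≤ c * (x + 1) * x :=
    (div_le_iff₀ hx).1 (by linarith [hstep (x + 1) (by positivity)])
  linarith [hmono x hx]

end Convexity

section ElementaryFunctions

lemma convexOn_log_sinh_div : ConvexOn ℝ (Ioi 0) fun u ↦ log (sinh u / u) := by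
  have hsinh {u : ℝ} (hu : 0 < u) : 0 < sinh u := sinh_pos_iff.2 hu
  have hderiv (u : ℝ) (hu : 0 < u) :
      HasDerivAt (fun u ↦ log (sinh u) - log u) (cosh u / sinh u - u⁻¹) u :=
    ((hasDerivAt_sinh u).log (hsinh hu).ne').sub (hasDerivAt_log hu.ne')
  have hderiv2 (u : ℝ) (hu : 0 < u) :
      HasDerivAt (fun u ↦ cosh u / sinh u - u⁻¹) ((u ^ 2)⁻¹ - (sinh u ^ 2)⁻¹) u := by
    refine (((hasDerivAt_cosh u).div (hasDerivAt_sinh u) (hsinh hu).ne').sub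
      (hasDerivAt_inv hu.ne')).congr_deriv ?_
    have := (hsinh hu).ne'
    field_simp
    linear_combination -u ^ 2 * cosh_sq u
  have hconv : ConvexOn ℝ (Ioi 0) fun u ↦ log (sinh u) - log u := by
    refine convexOn_of_hasDerivWithinAt2_nonneg (convex_Ioi 0)
      (f' := fun u ↦ cosh u / sinh u - u⁻¹) (f'' := fun u ↦ (u ^ 2)⁻¹ - (sinh u ^ 2)⁻¹)
      (fun u hu ↦ (hderiv u hu).continuousAt.continuousWithinAt) ?_ ?_ ?_ <;>
      intro u hu <;> rw [interior_Ioi, mem_Ioi] at hu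
    · exact (hderiv u hu).hasDerivWithinAt
    · exact (hderiv2 u hu).hasDerivWithinAt
    · have : u ≤ sinh u := self_le_sinh_iff.2 hu.le
      exact sub_nonneg.2 (by gcongr)
  exact hconv.congr fun u hu ↦ (log_div (hsinh hu).ne' (ne_of_gt hu)).symm

lemma exp_neg_lt_one {x : ℝ} (hx : 0 < x) : exp (-x) < 1 :=
  exp_lt_one_iff.2 (neg_neg_of_pos hx)

lemma one_sub_exp_neg_pos {x : ℝ} (hx : 0 < x) : 0 < 1 - exp (-x) :=
  sub_pos.2 (exp_neg_lt_one hx)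

lemma log_one_sub_exp_neg_div {x : ℝ} (hx : 0 < x) :
    log ((1 - exp (-x)) / x) = log (sinh (x / 2) / (x / 2)) - x / 2 := by
  have hratio : 0 < sinh (x / 2) / (x / 2) :=
    div_pos (sinh_pos_iff.2 (by positivity)) (by positivity)
  have hfactor : (1 - exp (-x)) / x = sinh (x / 2) / (x / 2) * exp (-(x / 2)) := by
    have hexp : exp (x / 2) * exp (-(x / 2)) = 1 := by rw [← exp_add]; simp
    have hsq : exp (-x) = exp (-(x / 2)) * exp (-(x / 2)) := by rw [← exp_add]; ring_nf
    rw [sinh_eq, hsq]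
    field_simp
    linear_combination -hexp
  rw [hfactor, log_mul hratio.ne' (exp_ne_zero _), log_exp, sub_eq_add_neg]

lemma convexOn_log_one_sub_exp_neg_div :
    ConvexOn ℝ (Ioi 0) fun x ↦ log ((1 - exp (-x)) / x) := by
  have hhalf : ConvexOn ℝ (Ioi 0) fun x : ℝ ↦ log (sinh (x / 2) / (x / 2)) := by
    refine ((convexOn_log_sinh_div.comp_linearMap (LinearMap.mul ℝ ℝ 2⁻¹)).subset
      (fun x (hx : 0 < x) ↦ ?_) (convex_Ioi 0)).congr fun x _ ↦ ?_
    · simpa using hx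
    · simp [div_eq_inv_mul]
  have hlin : ConcaveOn ℝ (Ioi 0) fun x : ℝ ↦ x / 2 :=
    ⟨convex_Ioi 0, fun x _ y _ a b _ _ _ ↦ by simp only [smul_eq_mul]; linarith⟩
  exact (hhalf.sub hlin).congr fun x hx ↦ (log_one_sub_exp_neg_div hx).symm

lemma log_one_sub_exp_neg_div_nonpos {x : ℝ} (hx : 0 < x) :
    log ((1 - exp (-x)) / x) ≤ 0 :=
  log_nonpos (div_pos (one_sub_exp_neg_pos hx) hx).le
    ((div_le_one hx).2 (by linarith [one_sub_le_exp_neg x]))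

lemma neg_half_le_log_one_sub_exp_neg_div {x : ℝ} (hx : 0 < x) :
    -(x / 2) ≤ log ((1 - exp (-x)) / x) := by
  have hsinh : x / 2 ≤ sinh (x / 2) := self_le_sinh_iff.2 (by positivity)
  have hlog : 0 ≤ log (sinh (x / 2) / (x / 2)) :=
    log_nonneg ((one_le_div (by positivity)).2 hsinh)
  linarith [log_one_sub_exp_neg_div hx]

end ElementaryFunctions

section QPochhammer

variable {a q : ℝ}

lemma summable_neg_mul_pow (a : ℝ) (hq : |q| < 1) : Summable fun k : ℕ ↦ -(a * q ^ k) :=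
  ((summable_geometric_of_abs_lt_one hq).mul_left a).neg

lemma multipliable_one_sub_mul_pow (a : ℝ) (hq : |q| < 1) :
    Multipliable fun k : ℕ ↦ 1 - a * q ^ k := by
  simpa only [sub_eq_add_neg] using
    Real.multipliable_one_add_of_summable (summable_neg_mul_pow a hq)

lemma one_sub_mul_pow_pos (ha : a < 1) (hq₀ : 0 ≤ q) (hq₁ : q ≤ 1) (k : ℕ) :
    0 < 1 - a * q ^ k := by
  have hk₀ : 0 ≤ q ^ k := pow_nonneg hq₀ k
  have hk₁ : q ^ k ≤ 1 := pow_le_one₀ hq₀ hq₁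
  rcases le_total a 0 with h | h <;> nlinarith

lemma summable_log_one_sub_mul_pow (a : ℝ) (hq : |q| < 1) :
    Summable fun k : ℕ ↦ log (1 - a * q ^ k) := by
  simpa only [sub_eq_add_neg] using
    Real.summable_log_one_add_of_summable (summable_neg_mul_pow a hq)

lemma exp_tsum_log_eq_qPochInfR (ha : a < 1) (hq₀ : 0 ≤ q) (hq₁ : q < 1) :
    exp (∑' k : ℕ, log (1 - a * q ^ k)) = qPochInfR a q :=
  Real.rexp_tsum_eq_tprod (one_sub_mul_pow_pos ha hq₀ hq₁.le)
    (summable_log_one_sub_mul_pow a (abs_lt.2 ⟨by linarith, hq₁⟩))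

lemma qPochInfR_pos (ha : a < 1) (hq₀ : 0 ≤ q) (hq₁ : q < 1) : 0 < qPochInfR a q :=
  exp_tsum_log_eq_qPochInfR ha hq₀ hq₁ ▸ exp_pos _

lemma hasSum_log_qPochInfR (ha : a < 1) (hq₀ : 0 ≤ q) (hq₁ : q < 1) :
    HasSum (fun k : ℕ ↦ log (1 - a * q ^ k)) (log (qPochInfR a q)) := by
  rw [← exp_tsum_log_eq_qPochInfR ha hq₀ hq₁, log_exp]
  exact (summable_log_one_sub_mul_pow a (abs_lt.2 ⟨by linarith, hq₁⟩)).hasSum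

lemma qPochInfR_eq_one_sub_mul (a : ℝ) (hq : |q| < 1) :
    qPochInfR a q = (1 - a) * qPochInfR (a * q) q := by
  have hshift (k : ℕ) : a * q ^ (k + 1) = a * q * q ^ k := by ring
  have hmult : Multipliable fun k : ℕ ↦ 1 - a * q ^ (k + 1) := by
    simpa only [hshift] using multipliable_one_sub_mul_pow (a * q) hq
  calc qPochInfR a q = (1 - a * q ^ 0) * ∏' k : ℕ, (1 - a * q ^ (k + 1)) := tprod_eq_zero_mul' hmult
    _ = (1 - a) * qPochInfR (a * q) q := by simp only [hshift, pow_zero, mul_one, qPochInfR]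

lemma log_qPochInfR_nonpos (ha₀ : 0 ≤ a) (ha₁ : a < 1) (hq₀ : 0 ≤ q) (hq₁ : q < 1) :
    log (qPochInfR a q) ≤ 0 := by
  refine (hasSum_log_qPochInfR ha₁ hq₀ hq₁).nonpos fun k ↦ ?_
  have : 0 ≤ a * q ^ k := by positivity
  exact log_nonpos (one_sub_mul_pow_pos ha₁ hq₀ hq₁.le k).le (by linarith)

lemma exp_neg_mul_mul_exp_neg_pow (κ z : ℝ) (k : ℕ) :
    exp (-(κ * z)) * exp (-κ) ^ k = exp (-(κ * (z + k))) := by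
  rw [← exp_nat_mul, ← exp_add]
  ring_nf

end QPochhammer

section LowerBound

lemma sum_range_exp_neg_pow_succ_le {x : ℝ} (hx : 0 < x) (n : ℕ) :
    ∑ k ∈ Finset.range n, exp (-x) ^ (k + 1) ≤ x⁻¹ := by
  have hr₁ : exp (-x) < 1 := exp_neg_lt_one hx
  have hgeom : HasSum (fun k : ℕ ↦ exp (-x) ^ (k + 1)) (exp (-x) * (1 - exp (-x))⁻¹) := by
    simpa only [pow_succ'] using (hasSum_geometric_of_lt_one (exp_pos _).le hr₁).mul_left _
  have hexp : (x + 1) * exp (-x) ≤ 1 := by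
    rw [exp_neg, ← div_eq_mul_inv, div_le_one (exp_pos x)]
    exact add_one_le_exp x
  calc ∑ k ∈ Finset.range n, exp (-x) ^ (k + 1)
      ≤ exp (-x) / (1 - exp (-x)) := sum_le_hasSum _ (fun k _ ↦ by positivity) hgeom
    _ ≤ x⁻¹ := by
      rw [← one_div, div_le_div_iff₀ (one_sub_exp_neg_pos hx) hx]
      linarith

lemma neg_sum_range_log_one_sub_exp_neg_pow_le {κ : ℝ} (hκ : 0 < κ) (n : ℕ) :
    -∑ k ∈ Finset.range n, log (1 - exp (-κ) ^ (k + 1)) ≤ π ^ 2 / (6 * κ) := by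
  have hlog (k : ℕ) : HasSum (fun m : ℕ ↦ (exp (-κ) ^ (k + 1)) ^ (m + 1) / (m + 1))
      (-log (1 - exp (-κ) ^ (k + 1))) := by
    refine hasSum_pow_div_log_of_abs_lt_one ?_
    rw [abs_of_pos (by positivity)]
    exact pow_lt_one₀ (exp_pos _).le (exp_neg_lt_one hκ) k.succ_ne_zero
  have hzeta : HasSum (fun m : ℕ ↦ ((m + 1 : ℝ) ^ 2)⁻¹ * κ⁻¹) (π ^ 2 / 6 * κ⁻¹) := by
    simpa using ((hasSum_nat_add_iff' 1).2 hasSum_zeta_two).mul_right κ⁻¹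
  have hterm (m : ℕ) : ∑ k ∈ Finset.range n, (exp (-κ) ^ (k + 1)) ^ (m + 1) / (m + 1 : ℝ) ≤
      ((m + 1 : ℝ) ^ 2)⁻¹ * κ⁻¹ := by
    have hswap (k : ℕ) : (exp (-κ) ^ (k + 1)) ^ (m + 1) = exp (-((m + 1) * κ)) ^ (k + 1) := by
      rw [pow_right_comm, ← exp_nat_mul]
      push_cast
      ring_nf
    calc ∑ k ∈ Finset.range n, (exp (-κ) ^ (k + 1)) ^ (m + 1) / (m + 1 : ℝ)
        = (∑ k ∈ Finset.range n, exp (-((m + 1) * κ)) ^ (k + 1)) / (m + 1) := by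
          simp only [hswap, Finset.sum_div]
      _ ≤ ((m + 1) * κ)⁻¹ / (m + 1) := by
          gcongr
          exact sum_range_exp_neg_pow_succ_le (by positivity) n
      _ = ((m + 1 : ℝ) ^ 2)⁻¹ * κ⁻¹ := by field_simp
  calc -∑ k ∈ Finset.range n, log (1 - exp (-κ) ^ (k + 1))
      ≤ π ^ 2 / 6 * κ⁻¹ := by
        rw [← Finset.sum_neg_distrib]
        exact hasSum_le hterm (hasSum_sum fun k _ ↦ hlog k) hzeta
    _ = π ^ 2 / (6 * κ) := by field_simp

lemma neg_pi_sq_div_le_log_qPochInfR_exp_neg {κ : ℝ} (hκ : 0 < κ) :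
    -(π ^ 2 / (6 * κ)) ≤ log (qPochInfR (exp (-κ)) (exp (-κ))) := by
  have hq : exp (-κ) < 1 := exp_neg_lt_one hκ
  refine ge_of_tendsto' (hasSum_log_qPochInfR hq (exp_pos _).le hq).tendsto_sum_nat fun n ↦ ?_
  simp only [← pow_succ']
  linarith [neg_sum_range_log_one_sub_exp_neg_pow_le hκ n]

end LowerBound

section Modularity

open Complex (I)

lemma eta_ofReal_mul_I {t : ℝ} (ht : 0 < t) :
    ModularForm.eta (t * I) =
      ((exp (-(π * t / 12)) * qPochInfR (exp (-(2 * π * t))) (exp (-(2 * π * t))) : ℝ) : ℂ) := by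
  have hq : |exp (-(2 * π * t))| < 1 := by
    rw [abs_exp]
    exact exp_neg_lt_one (by positivity)
  have hprod : (qPochInfR (exp (-(2 * π * t))) (exp (-(2 * π * t))) : ℂ) =
      ∏' n : ℕ, ((1 - exp (-(2 * π * t)) * exp (-(2 * π * t)) ^ n : ℝ) : ℂ) :=
    (multipliable_one_sub_mul_pow _ hq).map_tprod Complex.ofRealHom Complex.continuous_ofReal
  have hexponent : 2 * π * I * (t * I) = ((-(2 * π * t) : ℝ) : ℂ) := by
    push_cast
    linear_combination 2 * π * t * Complex.I_mul_I
  rw [ModularForm.eta, Complex.ofReal_mul, hprod]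
  congr 1
  · rw [Function.Periodic.qParam, hexponent, Complex.ofReal_exp]
    congr 1
    push_cast
    ring
  · refine tprod_congr fun n ↦ ?_
    rw [ModularForm.eta_q_eq_pow, hexponent, ← pow_succ']
    push_cast
    rfl

lemma eta_inv_mul_I_sq {t : ℝ} (ht : 0 < t) :
    ModularForm.eta ((t⁻¹ : ℝ) * I) ^ 2 = t * ModularForm.eta (t * I) ^ 2 := by
  have hmem : (t * I : ℂ) ∈ UpperHalfPlane.upperHalfPlaneSet := by
    simpa [UpperHalfPlane.upperHalfPlaneSet] using ht
  have hinv : -1 / (t * I) = ((t⁻¹ : ℝ) : ℂ) * I := by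
    rw [div_mul_eq_div_div_swap, Complex.div_I]
    push_cast
    ring
  have hsqrt (w : ℂ) : Complex.sqrt w ^ 2 = w := by simp [Complex.sqrt]
  have hS := ModularForm.eta_comp_eq_csqrt_I_inv hmem
  simp only [Function.comp_apply, Pi.smul_apply, Pi.mul_apply, smul_eq_mul, hinv] at hS
  rw [hS, mul_pow, mul_pow, inv_pow, hsqrt, hsqrt]
  field_simp

lemma log_qPochInfR_exp_neg_inversion {κ : ℝ} (hκ : 0 < κ) :
    log (qPochInfR (exp (-κ)) (exp (-κ))) + π ^ 2 / (6 * κ) + log κ / 2 - log √(2 * π) =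
      κ / 24 + log (qPochInfR (exp (-(4 * π ^ 2 / κ))) (exp (-(4 * π ^ 2 / κ)))) := by
  have hpos {x : ℝ} (hx : 0 < x) : 0 < qPochInfR (exp (-x)) (exp (-x)) :=
    have hx' := exp_neg_lt_one hx
    qPochInfR_pos hx' (exp_pos _).le hx'
  have hP := hpos hκ
  have hP' := hpos (show 0 < 4 * π ^ 2 / κ by positivity)
  have hS := eta_inv_mul_I_sq (show 0 < κ / (2 * π) by positivity)
  rw [eta_ofReal_mul_I (by positivity), eta_ofReal_mul_I (by positivity),
    show 2 * π * (κ / (2 * π))⁻¹ = 4 * π ^ 2 / κ by field_simp; ring,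
    show 2 * π * (κ / (2 * π)) = κ by field_simp] at hS
  have hlog := congrArg log (show _ = κ / (2 * π) * _ from mod_cast hS)
  rw [log_mul (by positivity) (by positivity), log_pow, log_pow,
    log_mul (by positivity) (by positivity), log_mul (by positivity) (by positivity),
    log_exp, log_exp, log_div (by positivity) (by positivity),
    show π * (κ / (2 * π)) / 12 = κ / 24 by field_simp; ring,
    show π * (κ / (2 * π))⁻¹ / 12 = π ^ 2 / (6 * κ) by field_simp; ring] at hlog
  rw [log_sqrt (by positivity)]
  push_cast at hlog
  linarith

end Modularity

section Remainder

/-- The remainder in the first-order expansion of `log (q ^ z; q)_∞` at `q = exp (-κ)`, i.e. the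
logarithm minus the terms of the expansion. -/
noncomputable def qPochRemainder (κ z : ℝ) : ℝ :=
  log (qPochInfR (exp (-(κ * z))) (exp (-κ))) + π ^ 2 / (6 * κ) + (z - 1 / 2) * log κ +
    log (Gamma z / √(2 * π))

variable {κ z : ℝ}

lemma qPochRemainder_one_mem_Icc (hκ : 0 < κ) : qPochRemainder κ 1 ∈ Icc 0 (κ / 24) := by
  have hκ' : 0 < 4 * π ^ 2 / κ := by positivity
  have hq : exp (-(4 * π ^ 2 / κ)) < 1 := exp_neg_lt_one hκ'
  have hupper := log_qPochInfR_nonpos (exp_pos _).le hq (exp_pos _).le hq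
  have hlower := neg_pi_sq_div_le_log_qPochInfR_exp_neg hκ'
  rw [show π ^ 2 / (6 * (4 * π ^ 2 / κ)) = κ / 24 by field_simp; ring] at hlower
  have hvalue : qPochRemainder κ 1 =
      κ / 24 + log (qPochInfR (exp (-(4 * π ^ 2 / κ))) (exp (-(4 * π ^ 2 / κ)))) := by
    rw [← log_qPochInfR_exp_neg_inversion hκ, qPochRemainder, Gamma_one, mul_one,
      one_div √(2 * π), log_inv]
    ring
  constructor <;> linarith

lemma qPochRemainder_add_one (hκ : 0 < κ) (hz : 0 < z) :
    qPochRemainder κ (z + 1) =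
      qPochRemainder κ z - log ((1 - exp (-(κ * z))) / (κ * z)) := by
  have hκz : 0 < κ * z := by positivity
  have hq : exp (-κ) < 1 := exp_neg_lt_one hκ
  have hP : 0 < qPochInfR (exp (-(κ * (z + 1)))) (exp (-κ)) :=
    qPochInfR_pos (exp_neg_lt_one (by positivity)) (exp_pos _).le hq
  have hshift : exp (-(κ * z)) * exp (-κ) = exp (-(κ * (z + 1))) := by
    simpa using exp_neg_mul_mul_exp_neg_pow κ z 1
  have hlogP : log (qPochInfR (exp (-(κ * z))) (exp (-κ))) =
      log (1 - exp (-(κ * z))) + log (qPochInfR (exp (-(κ * (z + 1)))) (exp (-κ))) := by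
    rw [qPochInfR_eq_one_sub_mul _ (by rwa [abs_exp]), hshift,
      log_mul (one_sub_exp_neg_pos hκz).ne' hP.ne']
  have hΓ : 0 < Gamma z / √(2 * π) := div_pos (Gamma_pos_of_pos hz) (by positivity)
  rw [qPochRemainder, qPochRemainder, hlogP, Gamma_add_one hz.ne', mul_div_assoc,
    log_mul hz.ne' hΓ.ne', log_div (one_sub_exp_neg_pos hκz).ne' hκz.ne',
    log_mul hκ.ne' hz.ne']
  ring

lemma qPochRemainder_le_add_one (hκ : 0 < κ) (hz : 0 < z) :
    qPochRemainder κ z ≤ qPochRemainder κ (z + 1) := by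
  linarith [qPochRemainder_add_one hκ hz, log_one_sub_exp_neg_div_nonpos (mul_pos hκ hz)]

lemma qPochRemainder_add_one_le (hκ : 0 < κ) (hz : 0 < z) :
    qPochRemainder κ (z + 1) ≤ qPochRemainder κ z + κ / 2 * z := by
  linarith [qPochRemainder_add_one hκ hz, neg_half_le_log_one_sub_exp_neg_div (mul_pos hκ hz)]

/-- The `n`-th approximation of `qPochRemainder κ z`, obtained by truncating the infinite product
for the q-Pochhammer symbol and Gauss's product for `Γ` after the same factor. -/
noncomputable def qPochRemainderSeq (κ z : ℝ) (n : ℕ) : ℝ :=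
  ∑ m ∈ Finset.range (n + 1), log ((1 - exp (-(κ * (z + m)))) / (κ * (z + m))) +
    (z * (log n + log κ) + ((n + 1 / 2) * log κ + log n.factorial + π ^ 2 / (6 * κ) - log √(2 * π)))

lemma tendsto_qPochRemainderSeq (hκ : 0 < κ) (hz : 0 < z) :
    Tendsto (qPochRemainderSeq κ z) atTop (𝓝 (qPochRemainder κ z)) := by
  have hP := (hasSum_log_qPochInfR (exp_neg_lt_one (mul_pos hκ hz))
    (exp_pos _).le (exp_neg_lt_one hκ)).tendsto_sum_nat.comp (tendsto_add_atTop_nat 1)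
  have hlim := (hP.add (Real.BohrMollerup.tendsto_log_gamma hz)).add_const
    (π ^ 2 / (6 * κ) + (z - 1 / 2) * log κ - log √(2 * π))
  have hvalue : log (qPochInfR (exp (-(κ * z))) (exp (-κ))) + log (Gamma z) +
      (π ^ 2 / (6 * κ) + (z - 1 / 2) * log κ - log √(2 * π)) = qPochRemainder κ z := by
    rw [qPochRemainder, log_div (Gamma_pos_of_pos hz).ne' (by positivity)]
    ring
  have hterm (m : ℕ) : log ((1 - exp (-(κ * (z + m)))) / (κ * (z + m))) =
      log (1 - exp (-(κ * (z + m)))) - log (z + m) - log κ := by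
    have hzm : 0 < z + m := by positivity
    rw [log_div (one_sub_exp_neg_pos (mul_pos hκ hzm)).ne' (by positivity),
      log_mul hκ.ne' hzm.ne']
    ring
  rw [hvalue] at hlim
  refine hlim.congr fun n ↦ ?_
  simp only [Function.comp_apply, exp_neg_mul_mul_exp_neg_pow, Real.BohrMollerup.logGammaSeq,
    qPochRemainderSeq, hterm, Finset.sum_sub_distrib, Finset.sum_const, Finset.card_range,
    nsmul_eq_mul]
  push_cast
  ring

lemma convexOn_qPochRemainderSeq (hκ : 0 < κ) (n : ℕ) :
    ConvexOn ℝ (Ioi 0) (qPochRemainderSeq κ · n) := by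
  have hterm (m : ℕ) :
      ConvexOn ℝ (Ioi 0) fun z : ℝ ↦ log ((1 - exp (-(κ * (z + m)))) / (κ * (z + m))) := by
    refine ⟨convex_Ioi 0, fun x (hx : 0 < x) y (hy : 0 < y) a b ha hb hab ↦ ?_⟩
    have hcomb : κ * (a • x + b • y + m) = a • (κ * (x + m)) + b • (κ * (y + m)) := by
      simp only [smul_eq_mul]
      linear_combination -κ * m * hab
    simpa only [hcomb] using convexOn_log_one_sub_exp_neg_div.2
      (show 0 < κ * (x + m) by positivity) (show 0 < κ * (y + m) by positivity) ha hb hab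
  have hsum : ConvexOn ℝ (Ioi 0) (∑ m ∈ Finset.range (n + 1),
      fun z : ℝ ↦ log ((1 - exp (-(κ * (z + m)))) / (κ * (z + m)))) :=
    Finset.sum_induction _ (ConvexOn ℝ (Ioi 0)) (fun _ _ ↦ ConvexOn.add)
      (convexOn_const 0 (convex_Ioi 0)) fun m _ ↦ hterm m
  have hlin : ConvexOn ℝ (Ioi 0) fun z : ℝ ↦ z * (log n + log κ) :=
    (LinearMap.mulRight ℝ (log n + log κ)).convexOn (convex_Ioi 0)
  refine (hsum.add (hlin.add_const ((n + 1 / 2) * log κ + log n.factorial + π ^ 2 / (6 * κ) -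
    log √(2 * π)))).congr fun z _ ↦ ?_
  simp only [Pi.add_apply, Finset.sum_apply, qPochRemainderSeq]

lemma convexOn_qPochRemainder (hκ : 0 < κ) : ConvexOn ℝ (Ioi 0) (qPochRemainder κ) :=
  convexOn_of_tendsto (convex_Ioi 0) (convexOn_qPochRemainderSeq hκ)
    fun _ hz ↦ tendsto_qPochRemainderSeq hκ hz

end Remainder

end

theorem statement15_general (κ z : ℝ) (hκ : 0 < κ) (hz : 0 < z) :
    |Real.log (qPochInfR (Real.exp (-(κ * z))) (Real.exp (-κ))) +
        Real.pi ^ 2 / (6 * κ) + (z - 1 / 2) * Real.log κ +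
        Real.log (Real.Gamma z / Real.sqrt (2 * Real.pi))| ≤
      κ / 2 * (1 + z) ^ 2 := by
  change |qPochRemainder κ z| ≤ _
  obtain ⟨hone_nonneg, hone_le⟩ := qPochRemainder_one_mem_Icc hκ
  have h12 : qPochRemainder κ 1 ≤ qPochRemainder κ 2 :=
    one_add_one_eq_two (R := ℝ) ▸ qPochRemainder_le_add_one hκ one_pos
  have hlower := sub_le_of_convexOn_of_add_one_le (convexOn_qPochRemainder hκ) h12
    (fun _ ↦ qPochRemainder_add_one_le hκ) hz
  have hupper := le_add_of_convexOn_of_add_one_le (convexOn_qPochRemainder hκ)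
    (fun _ ↦ qPochRemainder_le_add_one hκ) (fun _ ↦ qPochRemainder_add_one_le hκ) hz
  have hκz : 0 ≤ κ * z := by positivity
  have hκz2 : 0 ≤ κ * z ^ 2 := by positivity
  exact abs_le.2 ⟨by linarith, by linarith⟩

theorem statement15 (b ε r₀ : ℝ) (hb : b ∈ Set.Ioo (0 : ℝ) 1)
    (hε : ε ∈ Set.Ioo (0 : ℝ) (1 / 2)) (hr₀ : 0 < r₀) :
    ∃ C > (0 : ℝ), ∃ κ₀ > (0 : ℝ), ∀ κ : ℝ, 0 < κ → κ < κ₀ → ∀ z : ℝ, r₀ < z →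
      |Real.log (qPochInfR (Real.exp (-(κ * z))) (Real.exp (-κ))) +
        Real.pi ^ 2 / (6 * κ) + (z - 1 / 2) * Real.log κ +
        Real.log (Real.Gamma z / Real.sqrt (2 * Real.pi))| ≤
      C * (κ * (1 + z) ^ (2 : ℕ) + κ ^ b * (1 + z) ^ (1 + 2 * b + ε)) := by
  refine ⟨1, one_pos, 1, one_pos, fun κ hκ _ z hz ↦ ?_⟩
  have hz₀ : 0 < z := hr₀.trans hz
  have hrest : 0 ≤ κ ^ b * (1 + z) ^ (1 + 2 * b + ε) := by positivity
  have hmain : 0 ≤ κ * (1 + z) ^ 2 := by positivity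
  linarith [statement15_general κ z hκ hz₀]
end
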